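/- Let σ be a saturation function and V₀(z,y) = ‖y‖² + ∫₀^{‖z‖} S(ξ)dξ + ∫₀^{‖z−y‖} S(ξ)dξ. There exist ε₀>0 and C>0 such that for every ε∈(0,ε₀) and every (z₀,y₀)∈ℝ²×ℝ², there exists a time T₂(z₀,y₀)≥0 with the following property: for every T with 1/2 ≤ T ≤ 2 and T/ε an integer, the solution (z(t),y(t)) of (T_ε) with (z(0),y(0))=(z₀,y₀) satisfies V₀(z(T₂+T),y(T₂+T)) − V₀(z(T₂),y(T₂)) ≤ −C·∫_{T₂}^{T₂+T} [‖y(t)‖² + (b_ε(t)ᵀz(t))²] dt, where T₂ = T₂(z₀,y₀). -/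

import Mathlib

open Real Filter MeasureTheory intervalIntegral RealInnerProductSpace

noncomputable section

/-- A saturation function: odd, globally Lipschitz, sign-definite, with finite positive limits
of `σ` at `+∞` and of `σ ξ / ξ` at `0`, non-decreasing, differentiable on `(0,∞)` with
non-increasing derivative there. -/
def IsSaturation (σ : ℝ → ℝ) : Prop :=
  (∀ ξ, σ (-ξ) = -σ ξ) ∧
  (∃ L : NNReal, LipschitzWith L σ) ∧
  (∀ ξ : ℝ, ξ ≠ 0 → σ ξ * ξ > 0) ∧
  (∃ l > 0, Tendsto σ atTop (nhds l)) ∧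
  (∃ l > 0, Tendsto (fun ξ => σ ξ / ξ) (nhdsWithin 0 {(0:ℝ)}ᶜ) (nhds l)) ∧
  Monotone σ ∧
  DifferentiableOn ℝ σ (Set.Ioi 0) ∧
  AntitoneOn (deriv σ) (Set.Ioi 0)

/-- The modified saturation function `S` associated with `σ`:
`S ξ = (2/π) ∫_0^{π/2} sin v · σ(ξ sin v) dv`. -/
def modSat (σ : ℝ → ℝ) (ξ : ℝ) : ℝ :=
  (2 / Real.pi) * ∫ v in (0:ℝ)..(Real.pi / 2), Real.sin v * σ (ξ * Real.sin v)

abbrev E2 := EuclideanSpace ℝ (Fin 2)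

open Classical in
/-- The radial vector field `f(z) = S(‖z‖) z / ‖z‖`, `f(0) = 0`. -/
def fvec (σ : ℝ → ℝ) (z : E2) : E2 :=
  if z = 0 then 0 else (modSat σ ‖z‖ / ‖z‖) • z

/-- `b_ε(t) = R_{-2πt/ε} e₂ = (sin(2πt/ε), cos(2πt/ε))`. -/
def bvp (ε t : ℝ) : E2 :=
  (WithLp.equiv 2 (Fin 2 → ℝ)).symm ![Real.sin (2 * Real.pi * t / ε), Real.cos (2 * Real.pi * t / ε)]

/-- The Lyapunov function `V₀(z,y) = ‖y‖² + ∫₀^{‖z‖} S + ∫₀^{‖z-y‖} S`. -/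
def V0 (σ : ℝ → ℝ) (z y : E2) : ℝ :=
  ‖y‖ ^ 2 + (∫ ξ in (0:ℝ)..‖z‖, modSat σ ξ) + ∫ ξ in (0:ℝ)..‖z - y‖, modSat σ ξ

/-- `(z, y)` solves the time-varying system `(T_ε)`:
`ż = y - b_ε(t) σ(b_ε(t)ᵀ z)`, `ẏ = - b_ε(t) σ(b_ε(t)ᵀ z)`, for `t ≥ 0`. -/
def IsSolTeps (σ : ℝ → ℝ) (ε : ℝ) (z y : ℝ → E2) : Prop :=
  ∀ t : ℝ, 0 ≤ t →
    HasDerivAt z (y t - σ ⟪bvp ε t, z t⟫ • bvp ε t) t ∧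
    HasDerivAt y (-(σ ⟪bvp ε t, z t⟫) • bvp ε t) t

/-!
The velocity term of `d/dt V₀` along `(T_ε)` is, up to a factor, `⟪fvec σ z - b σ(bᵀz), y⟫` with
`b = b_ε(t)`. Since `fvec σ` is the mean of `z ↦ b σ(bᵀz)` over a period, this averaging error
integrates to zero at a frozen state, and the rest of the derivative is non-positive.

Far from the origin the error need not be small, as `z` moves fast when `y` is large. But there `z`
moves essentially along `y`, and monotonicity of the feedback gives a one-sided bound which does not
involve `‖y‖`: `V₀ - 2ε⟪fvec σ z, y⟫` grows by at most `O(ε²)` per period. It drops by a multiple of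
`ε` in each period where `z` is large compared with its displacement, and a large `y` sweeps `z`
into this regime within unit time. As this function is bounded below, every solution enters a fixed
ball.

From that ball on, `‖(z, y)‖` stays bounded, the dissipation dominates `‖y‖² + (bᵀz)²`, and over a
period the averaging error is of order `ε² ‖(z, y)‖²` whereas the dissipation is at least of order
`ε ‖(z, y)‖²`.
-/

section RealFunctions

variable {f : ℝ → ℝ} {L : NNReal}

theorem sub_mul_sub_nonneg_of_monotone (hf : Monotone f) (a b : ℝ) :
    0 ≤ (f a - f b) * (a - b) :=
  monovary_iff_forall_mul_nonneg.1 (monovary_id_iff.2 hf) b a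

theorem sq_sub_le_mul_of_monotone_of_lipschitz (hf : Monotone f) (hL : LipschitzWith L f)
    (a b : ℝ) : (f a - f b) ^ 2 ≤ L * ((f a - f b) * (a - b)) := by
  have habs : |f a - f b| ≤ L * |a - b| := by simpa only [Real.dist_eq] using hL.dist_le_mul a b
  calc (f a - f b) ^ 2 = |f a - f b| * |f a - f b| := by rw [← sq, sq_abs]
    _ ≤ |f a - f b| * (L * |a - b|) := by gcongr
    _ = L * |(f a - f b) * (a - b)| := by rw [abs_mul]; ring
    _ = L * ((f a - f b) * (a - b)) := by
      rw [abs_of_nonneg (sub_mul_sub_nonneg_of_monotone hf a b)]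

theorem neg_le_mul_sub_of_abs_sub_le (hf : Monotone f) (hL : LipschitzWith L f)
    {a b d m q : ℝ} (hd : 0 ≤ d) (h : |a - d * q - b| ≤ m * d) :
    -(m ^ 2 * L * d / 4) ≤ q * (f a - f b) := by
  rcases eq_or_ne (f a - f b) 0 with hΔ | hΔ
  · rw [hΔ, mul_zero, neg_nonpos]
    positivity
  have hcoco := sq_sub_le_mul_of_monotone_of_lipschitz hf hL a b
  have hL0 : (0 : ℝ) < L := by
    refine L.coe_nonneg.lt_of_ne fun h0 => hΔ ?_
    rw [← h0, zero_mul] at hcoco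
    exact sq_eq_zero_iff.1 (le_antisymm hcoco (sq_nonneg _))
  have hd0 : 0 < d := by
    refine hd.lt_of_ne fun h0 => hΔ ?_
    rw [← h0, mul_zero, zero_mul, sub_zero, abs_nonpos_iff, sub_eq_zero] at h
    rw [h, sub_self]
  have herr : (a - d * q - b) * (f a - f b) ≤ m * d * |f a - f b| :=
    (le_abs_self _).trans (by rw [abs_mul]; gcongr)
  have hscaled : 0 ≤ L * d * (q * (f a - f b) + m ^ 2 * L * d / 4) := by
    have hle := mul_le_mul_of_nonneg_left herr hL0.le
    calc 0 ≤ (|f a - f b| - m * L * d / 2) ^ 2 := sq_nonneg _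
      _ = (f a - f b) ^ 2 - L * (m * d * |f a - f b|) + (m * L * d / 2) ^ 2 := by
        rw [sub_sq, sq_abs]; ring
      _ ≤ L * ((f a - f b) * (a - b)) - L * ((a - d * q - b) * (f a - f b))
          + (m * L * d / 2) ^ 2 := by gcongr
      _ = L * d * (q * (f a - f b) + m ^ 2 * L * d / 4) := by ring
  linarith [nonneg_of_mul_nonneg_right hscaled (by positivity)]

theorem slope_le_slope_of_concaveOn {s : Set ℝ} (hf : ConcaveOn ℝ s f) {a b c d : ℝ}
    (ha : a ∈ s) (hb : b ∈ s) (hc : c ∈ s) (hd : d ∈ s) (hab : a < b) (hbc : b ≤ c)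
    (hcd : c < d) : slope f c d ≤ slope f a b :=
  calc slope f c d = slope f d c := slope_comm f c d
    _ ≤ slope f d a := hf.slope_anti hd ⟨ha, (hab.trans_le (hbc.trans hcd.le)).ne⟩ ⟨hc, hcd.ne⟩
      (hab.le.trans hbc)
    _ = slope f a d := slope_comm f d a
    _ ≤ slope f a b := hf.slope_anti ha ⟨hb, hab.ne'⟩ ⟨hd, (hab.trans_le (hbc.trans hcd.le)).ne'⟩
      (hbc.trans hcd.le)

theorem exists_monotoneOn_sub_mul_Icc (hf : ConcaveOn ℝ (Set.Ici 0) f) {δ d : ℝ} (hδ : 0 ≤ δ)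
    (hδd : δ < d) (hfδ : f δ < f d) : ∃ m > 0, MonotoneOn (fun x => f x - m * x) (Set.Icc 0 δ) := by
  refine ⟨slope f δ d, slope_pos_iff hδd |>.2 hfδ, fun a ha b hb hab => ?_⟩
  rcases hab.eq_or_lt with rfl | hlt
  · exact le_rfl
  have hslope : slope f δ d ≤ slope f a b :=
    slope_le_slope_of_concaveOn hf ha.1 hb.1 hδ (hδ.trans hδd.le) hlt hb.2 hδd
  rw [slope_def_field f a b, le_div_iff₀ (sub_pos.2 hlt)] at hslope
  simp only
  linarith

theorem div_mul_sq_le_mul_of_concaveOn_of_odd (hf : ConcaveOn ℝ (Set.Ici 0) f)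
    (hodd : Function.Odd f) {r x : ℝ} (hr : 0 < r) (hx : |x| ≤ r) :
    f r / r * x ^ 2 ≤ x * f x := by
  wlog hx0 : 0 ≤ x generalizing x
  · have := this (x := -x) (by rwa [abs_neg]) (by linarith)
    rwa [neg_sq, hodd, neg_mul_neg] at this
  have hxr : x / r ≤ 1 := (div_le_one hr).2 ((le_abs_self x).trans hx)
  have hchord := hf.2 (Set.mem_Ici.2 hr.le) (Set.mem_Ici.2 le_rfl) (div_nonneg hx0 hr.le)
    (sub_nonneg.2 hxr) (add_sub_cancel _ _)
  simp only [smul_eq_mul, hodd.map_zero, mul_zero, add_zero, div_mul_cancel₀ x hr.ne'] at hchord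
  calc f r / r * x ^ 2 = x * (x / r * f r) := by ring
    _ ≤ x * f x := by gcongr

theorem half_sq_sub_sq_le_sq {a b δ : ℝ} (h : |a - b| ≤ δ) : b ^ 2 / 2 - δ ^ 2 ≤ a ^ 2 := by
  have hsq : (a - b) ^ 2 ≤ δ ^ 2 := sq_le_sq' (neg_le_of_abs_le h) (le_of_abs_le h)
  nlinarith [sq_nonneg (2 * a - b)]

theorem exists_nat_mul_mem_Icc {ε a b : ℝ} (hε : 0 < ε) (ha : 0 ≤ a) (hab : a + ε ≤ b) :
    ∃ n : ℕ, n * ε ∈ Set.Icc a b := by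
  have hlt := (lt_div_iff₀ hε).1 (sub_lt_iff_lt_add.2 (Nat.ceil_lt_add_one (div_nonneg ha hε.le)))
  exact ⟨⌈a / ε⌉₊, (div_le_iff₀ hε).1 (Nat.le_ceil _), by linarith⟩

theorem le_add_nat_mul_of_forall_step_le {w : ℝ → ℝ} {t ε A : ℝ} {n : ℕ}
    (h : ∀ j < n, w (t + j * ε + ε) ≤ w (t + j * ε) + A) : w (t + n * ε) ≤ w t + n * A := by
  induction n with
  | zero => simp
  | succ n ih =>
    have hlast := h n n.lt_succ_self
    rw [add_assoc, ← add_one_mul] at hlast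
    push_cast
    linarith [ih fun j hj => h j (hj.trans n.lt_succ_self)]

end RealFunctions

/-- A saturation nonlinearity described by concavity on `[0,∞)` instead of a monotone derivative,
so that clamped functions such as `ξ ↦ ξ / max 1 |ξ|` qualify; `L` is a Lipschitz constant and `M`
a bound. -/
structure IsConcaveSaturation (σ : ℝ → ℝ) (L : NNReal) (M : ℝ) : Prop where
  odd : Function.Odd σ
  lipschitz : LipschitzWith L σ
  abs_le : ∀ x, |σ x| ≤ M
  monotone : Monotone σ
  pos : ∀ x, 0 < x → 0 < σ x
  concaveOn : ConcaveOn ℝ (Set.Ici 0) σ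

theorem IsSaturation.exists_isConcaveSaturation {σ : ℝ → ℝ} (hσ : IsSaturation σ) :
    ∃ L M, IsConcaveSaturation σ L M := by
  obtain ⟨hodd, ⟨L, hL⟩, hpos, ⟨l, -, hlim⟩, -, hmono, hdiff, hanti⟩ := hσ
  have hle : ∀ x, σ x ≤ l := hmono.ge_of_tendsto hlim
  refine ⟨L, l, hodd, hL, fun x => abs_le.2 ⟨?_, hle x⟩, hmono, fun x hx => ?_, ?_⟩
  · linarith [hle (-x), hodd x]
  · exact pos_of_mul_pos_left (hpos x hx.ne') hx.le
  · refine AntitoneOn.concaveOn_of_deriv (convex_Ici 0) hL.continuous.continuousOn ?_ ?_ <;>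
      rwa [interior_Ici]

namespace IsConcaveSaturation

variable {σ : ℝ → ℝ} {L : NNReal} {M : ℝ}

theorem continuous (h : IsConcaveSaturation σ L M) : Continuous σ := h.lipschitz.continuous

theorem map_zero (h : IsConcaveSaturation σ L M) : σ 0 = 0 := h.odd.map_zero

theorem bound_pos (h : IsConcaveSaturation σ L M) : 0 < M :=
  (h.pos 1 one_pos).trans_le ((le_abs_self _).trans (h.abs_le 1))

theorem bound_nonneg (h : IsConcaveSaturation σ L M) : 0 ≤ M := h.bound_pos.le

theorem mul_self_nonneg (h : IsConcaveSaturation σ L M) (x : ℝ) : 0 ≤ x * σ x := by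
  simpa [h.map_zero, mul_comm] using sub_mul_sub_nonneg_of_monotone h.monotone x 0

theorem exists_monotoneOn_sub_mul (h : IsConcaveSaturation σ L M) :
    ∃ δ > 0, ∃ m > 0, MonotoneOn (fun x => σ x - m * x) (Set.Icc 0 δ) := by
  have hnear : ∀ᶠ x in nhds 0, σ x < σ 1 := by
    refine h.continuous.continuousAt.eventually_lt_const ?_
    rw [h.map_zero]
    exact h.pos 1 one_pos
  obtain ⟨δ, ⟨hδ1, hσδ⟩, hδ0⟩ := ((eventually_nhdsWithin_of_eventually_nhds
    ((eventually_lt_nhds one_pos).and hnear)).and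
    (self_mem_nhdsWithin (s := Set.Ioi (0 : ℝ)))).exists
  exact ⟨δ, hδ0, exists_monotoneOn_sub_mul_Icc h.concaveOn hδ0.le hδ1 hσδ⟩

end IsConcaveSaturation

section ModSat

variable {σ : ℝ → ℝ}

theorem modSat_zero (h0 : σ 0 = 0) : modSat σ 0 = 0 := by
  simp [modSat, h0]

theorem continuous_modSat (hσ : Continuous σ) : Continuous (modSat σ) := by
  unfold modSat
  refine continuous_const.mul ?_
  apply intervalIntegral.continuous_parametric_intervalIntegral_of_continuous'
  fun_prop

theorem modSat_id (r : ℝ) : modSat id r = r / 2 := by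
  have hsin : ∀ v, sin v * id (r * sin v) = r * sin v ^ 2 := fun v => by rw [id]; ring
  have hvalue : ∫ v in (0 : ℝ)..(π / 2), sin v ^ 2 = π / 4 := by
    rw [integral_sin_sq]
    simp
    ring
  simp_rw [modSat, hsin]
  rw [intervalIntegral.integral_const_mul, hvalue]
  field_simp
  ring

theorem monotoneOn_modSat_sub_mul (hσ : Continuous σ) (hmono : Monotone σ) {m δ R v₀ : ℝ}
    (hm : MonotoneOn (fun x => σ x - m * x) (Set.Icc 0 δ)) (hv₀ : 0 ≤ v₀) (hv₀' : v₀ ≤ π / 2)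
    (hR : 0 ≤ R) (hRδ : R * v₀ ≤ δ) :
    MonotoneOn (fun r => modSat σ r - 2 / π * (m * ∫ v in (0 : ℝ)..v₀, sin v ^ 2) * r)
      (Set.Icc 0 R) := by
  intro a ha b hb hab
  have hsin : ∀ v ∈ Set.Icc 0 (π / 2), 0 ≤ sin v := fun v hv =>
    sin_nonneg_of_nonneg_of_le_pi hv.1 (by linarith [hv.2, pi_pos])
  have hint : ∀ p q, IntervalIntegrable
      (fun v => sin v * σ (b * sin v) - sin v * σ (a * sin v)) volume p q :=
    fun p q => Continuous.intervalIntegrable (by fun_prop) p q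
  have hnonneg : ∀ v ∈ Set.Icc 0 (π / 2), 0 ≤ sin v * σ (b * sin v) - sin v * σ (a * sin v) :=
    fun v hv => by
      rw [← mul_sub]
      exact mul_nonneg (hsin v hv)
        (sub_nonneg.2 (hmono (mul_le_mul_of_nonneg_right hab (hsin v hv))))
  have hgrowth : ∀ v ∈ Set.Icc 0 v₀,
      m * (b - a) * sin v ^ 2 ≤ sin v * σ (b * sin v) - sin v * σ (a * sin v) := fun v hv => by
    have hs := hsin v ⟨hv.1, hv.2.trans hv₀'⟩
    have hab' : a * sin v ≤ b * sin v := mul_le_mul_of_nonneg_right hab hs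
    have hbδ : b * sin v ≤ δ :=
      (mul_le_mul hb.2 ((sin_le hv.1).trans hv.2) hs hR).trans hRδ
    have := hm ⟨mul_nonneg ha.1 hs, hab'.trans hbδ⟩ ⟨mul_nonneg hb.1 hs, hbδ⟩ hab'
    calc m * (b - a) * sin v ^ 2 = sin v * (m * (b * sin v) - m * (a * sin v)) := by ring
      _ ≤ sin v * (σ (b * sin v) - σ (a * sin v)) :=
        mul_le_mul_of_nonneg_left (by linarith) hs
      _ = sin v * σ (b * sin v) - sin v * σ (a * sin v) := mul_sub _ _ _
  have hle : m * (b - a) * ∫ v in (0 : ℝ)..v₀, sin v ^ 2 ≤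
      ∫ v in (0 : ℝ)..(π / 2), (sin v * σ (b * sin v) - sin v * σ (a * sin v)) := by
    rw [← intervalIntegral.integral_const_mul]
    refine (integral_mono_on hv₀ (Continuous.intervalIntegrable (by fun_prop) _ _) (hint _ _)
      hgrowth).trans (integral_mono_interval le_rfl hv₀ hv₀' ?_ (hint _ _))
    exact (ae_restrict_iff' measurableSet_Ioc).2
      (ae_of_all _ fun v hv => hnonneg v (Set.Ioc_subset_Icc_self hv))
  rw [integral_sub (Continuous.intervalIntegrable (by fun_prop) _ _)
    (Continuous.intervalIntegrable (by fun_prop) _ _)] at hle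
  have hscaled := mul_le_mul_of_nonneg_left hle (by positivity : 0 ≤ 2 / π)
  simp only [modSat]
  linarith

end ModSat

namespace IsConcaveSaturation

variable {σ : ℝ → ℝ} {L : NNReal} {M : ℝ}

theorem exists_monotoneOn_modSat_sub_mul (h : IsConcaveSaturation σ L M) (R : ℝ) :
    ∃ c > 0, MonotoneOn (fun r => modSat σ r - c * r) (Set.Icc 0 R) := by
  obtain ⟨δ, hδ, m, hm, hmono⟩ := h.exists_monotoneOn_sub_mul
  set R' := max R 1
  set v₀ := min (δ / R') (π / 2)
  have hR' : 0 < R' := by positivity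
  have hv₀ : 0 < v₀ := by positivity
  have hv₀' : v₀ ≤ π / 2 := min_le_right _ _
  have hpos : 0 < ∫ v in (0 : ℝ)..v₀, sin v ^ 2 :=
    intervalIntegral_pos_of_pos_on (Continuous.intervalIntegrable (by fun_prop) _ _)
      (fun v hv => pow_pos (sin_pos_of_pos_of_lt_pi hv.1 (by linarith [hv.2, pi_pos])) 2) hv₀
  have hRδ : R' * v₀ ≤ δ := (le_div_iff₀' hR').1 (min_le_left _ _)
  exact ⟨_, by positivity, (monotoneOn_modSat_sub_mul h.continuous h.monotone hmono hv₀.le hv₀'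
    hR'.le hRδ).mono (Set.Icc_subset_Icc_right (le_max_left R 1))⟩

theorem exists_mul_le_modSat (h : IsConcaveSaturation σ L M) (R : ℝ) :
    ∃ c > 0, ∀ r ∈ Set.Icc 0 R, c * r ≤ modSat σ r := by
  obtain ⟨c, hc, hmono⟩ := h.exists_monotoneOn_modSat_sub_mul R
  refine ⟨c, hc, fun r hr => ?_⟩
  have := hmono ⟨le_rfl, hr.1.trans hr.2⟩ hr hr.1
  simp only [modSat_zero h.map_zero, mul_zero, sub_zero] at this
  linarith

theorem modSat_pos (h : IsConcaveSaturation σ L M) {r : ℝ} (hr : 0 < r) : 0 < modSat σ r := by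
  obtain ⟨c, hc, hle⟩ := h.exists_mul_le_modSat r
  exact (mul_pos hc hr).trans_le (hle r ⟨hr.le, le_rfl⟩)

theorem modSat_nonneg (h : IsConcaveSaturation σ L M) {r : ℝ} (hr : 0 ≤ r) : 0 ≤ modSat σ r := by
  rcases hr.eq_or_lt with rfl | hr
  · exact (modSat_zero h.map_zero).ge
  · exact (h.modSat_pos hr).le

theorem monotoneOn_modSat (h : IsConcaveSaturation σ L M) :
    MonotoneOn (modSat σ) (Set.Ici 0) := by
  intro a ha b hb hab
  obtain ⟨c, hc, hmono⟩ := h.exists_monotoneOn_modSat_sub_mul b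
  have := hmono ⟨ha, hab⟩ ⟨hb, le_rfl⟩ hab
  simp only at this
  linarith [mul_le_mul_of_nonneg_left hab hc.le]

end IsConcaveSaturation

section RadialField

variable {E : Type*} [NormedAddCommGroup E] [InnerProductSpace ℝ E]

/-- The radial vector field of profile `S`, the gradient of `z ↦ ∫ ξ in 0..‖z‖, S ξ` when `S 0 = 0`;
it vanishes at the origin whatever the junk value `S 0 / 0`. -/
def radialField (S : ℝ → ℝ) (z : E) : E := (S ‖z‖ / ‖z‖) • z

theorem inner_radialField_sub_nonneg {S : ℝ → ℝ} {R : ℝ} (h0 : S 0 = 0)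
    (hS : MonotoneOn S (Set.Icc 0 R)) {z w : E} (hz : ‖z‖ ≤ R) (hw : ‖w‖ ≤ R) :
    0 ≤ ⟪radialField S z - radialField S w, z - w⟫ := by
  have hratio : ∀ x : E, S ‖x‖ / ‖x‖ * ‖x‖ = S ‖x‖ := fun x =>
    div_mul_cancel_of_imp fun hx => by rw [hx, h0]
  have hnonneg : ∀ x : E, ‖x‖ ≤ R → 0 ≤ S ‖x‖ / ‖x‖ := fun x hx =>
    div_nonneg (h0.symm.trans_le (hS ⟨le_rfl, (norm_nonneg x).trans hx⟩ ⟨norm_nonneg x, hx⟩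
      (norm_nonneg x))) (norm_nonneg x)
  have hnorms : 0 ≤ (S ‖z‖ - S ‖w‖) * (‖z‖ - ‖w‖) := by
    rcases le_total ‖z‖ ‖w‖ with hle | hle
    · exact mul_nonneg_of_nonpos_of_nonpos
        (sub_nonpos.2 (hS ⟨norm_nonneg z, hz⟩ ⟨norm_nonneg w, hw⟩ hle)) (sub_nonpos.2 hle)
    · exact mul_nonneg (sub_nonneg.2 (hS ⟨norm_nonneg w, hw⟩ ⟨norm_nonneg z, hz⟩ hle))
        (sub_nonneg.2 hle)
  calc 0 ≤ (S ‖z‖ - S ‖w‖) * (‖z‖ - ‖w‖)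
        + (S ‖z‖ / ‖z‖ + S ‖w‖ / ‖w‖) * (‖z‖ * ‖w‖ - ⟪z, w⟫) :=
      add_nonneg hnorms (mul_nonneg (add_nonneg (hnonneg z hz) (hnonneg w hw))
        (sub_nonneg.2 (real_inner_le_norm z w)))
    _ = ⟪radialField S z - radialField S w, z - w⟫ := by
      simp only [radialField, inner_sub_left, inner_sub_right, real_inner_smul_left,
        real_inner_self_eq_norm_sq, real_inner_comm z w]
      linear_combination (‖w‖ - ‖z‖) * hratio z + (‖z‖ - ‖w‖) * hratio w

theorem mul_sq_norm_sub_le_inner_radialField_sub {S : ℝ → ℝ} {c R : ℝ} (h0 : S 0 = 0)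
    (hS : MonotoneOn (fun r => S r - c * r) (Set.Icc 0 R)) {z w : E} (hz : ‖z‖ ≤ R)
    (hw : ‖w‖ ≤ R) : c * ‖z - w‖ ^ 2 ≤ ⟪radialField S z - radialField S w, z - w⟫ := by
  have hsplit : ∀ x : E, radialField (fun r => S r - c * r) x = radialField S x - c • x := by
    intro x
    rcases eq_or_ne x 0 with rfl | hx
    · simp [radialField]
    · rw [radialField, sub_div, mul_div_cancel_right₀ c (norm_ne_zero_iff.2 hx), sub_smul,
        radialField]
  have hnonneg := inner_radialField_sub_nonneg (by simp [h0]) hS hz hw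
  rw [hsplit, hsplit, sub_sub_sub_comm, ← smul_sub, inner_sub_left, real_inner_smul_left,
    real_inner_self_eq_norm_sq] at hnonneg
  exact sub_nonneg.1 hnonneg

theorem hasDerivAt_norm_of_ne_zero {z : ℝ → E} {z' : E} {t : ℝ} (hz : HasDerivAt z z' t)
    (h0 : z t ≠ 0) : HasDerivAt (fun s => ‖z s‖) (⟪z t, z'⟫ / ‖z t‖) t := by
  have hpos : 0 < ‖z t‖ := norm_pos_iff.2 h0
  have hsqrt := hz.norm_sq.sqrt (pow_pos hpos 2).ne'
  simp only [Real.sqrt_sq (norm_nonneg _)] at hsqrt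
  exact hsqrt.congr_deriv (by field_simp)

theorem hasDerivAt_integral_norm {S : ℝ → ℝ} (hS : Continuous S) (h0 : S 0 = 0) {z : ℝ → E}
    {z' : E} {t : ℝ} (hz : HasDerivAt z z' t) :
    HasDerivAt (fun s => ∫ ξ in (0 : ℝ)..‖z s‖, S ξ) ⟪radialField S (z t), z'⟫ t := by
  have hprim : ∀ r, HasDerivAt (fun r => ∫ ξ in (0 : ℝ)..r, S ξ) (S r) r := fun r =>
    (hS.integral_hasStrictDerivAt 0 r).hasDerivAt
  rcases eq_or_ne (z t) 0 with hzt | hzt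
  · have hsmall : (fun r => ∫ ξ in (0 : ℝ)..r, S ξ) =o[nhds 0] fun r => r := by
      simpa [h0] using hasDerivAt_iff_isLittleO.1 (hprim 0)
    have hnorm : Tendsto (fun s => ‖z s‖) (nhds t) (nhds 0) := by
      simpa [hzt] using hz.continuousAt.norm.tendsto
    have hlin : (fun s => ‖z s‖) =O[nhds t] fun s => s - t := by
      simpa [hzt] using hz.isBigO_sub.norm_left
    rw [hasDerivAt_iff_isLittleO]
    simpa [hzt, radialField, Function.comp_def] using
      (hsmall.comp_tendsto hnorm).trans_isBigO hlin
  · refine ((hprim _).comp t (hasDerivAt_norm_of_ne_zero hz hzt)).congr_deriv ?_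
    rw [radialField, real_inner_smul_left]
    ring

end RadialField

section Feedback

variable {E : Type*} [NormedAddCommGroup E] [InnerProductSpace ℝ E] {σ : ℝ → ℝ} {L : NNReal}
  {M : ℝ} {b : E}

/-- The saturated feedback `b σ(bᵀ z)` of `(T_ε)` acting in the direction `b`. -/
def feedback (σ : ℝ → ℝ) (b z : E) : E := σ ⟪b, z⟫ • b

theorem inner_feedback_left (σ : ℝ → ℝ) (b z v : E) :
    ⟪feedback σ b z, v⟫ = ⟪b, v⟫ * σ ⟪b, z⟫ := by
  rw [feedback, real_inner_smul_left, mul_comm]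

theorem norm_feedback_le (hM : ∀ x, |σ x| ≤ M) (hb : ‖b‖ = 1) (z : E) : ‖feedback σ b z‖ ≤ M := by
  rw [feedback, norm_smul, hb, mul_one]
  exact hM _

theorem abs_inner_le_norm_of_norm_eq_one (hb : ‖b‖ = 1) (z : E) : |⟪b, z⟫| ≤ ‖z‖ := by
  simpa only [hb, one_mul] using abs_real_inner_le_norm b z

theorem lipschitzWith_feedback (hL : LipschitzWith L σ) (hb : ‖b‖ = 1) :
    LipschitzWith L (feedback σ b) :=
  LipschitzWith.of_dist_le_mul fun z w =>
    calc dist (feedback σ b z) (feedback σ b w) = dist (σ ⟪b, z⟫) (σ ⟪b, w⟫) := by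
          rw [dist_eq_norm, feedback, feedback, ← sub_smul, norm_smul, hb, mul_one, dist_eq_norm]
      _ ≤ L * dist ⟪b, z⟫ ⟪b, w⟫ := hL.dist_le_mul _ _
      _ ≤ L * dist z w := by
          rw [Real.dist_eq, ← inner_sub_right, dist_eq_norm]
          gcongr
          exact abs_inner_le_norm_of_norm_eq_one hb _

theorem inner_feedback_sub_nonneg (hσ : Monotone σ) (b z w : E) :
    0 ≤ ⟪feedback σ b z - feedback σ b w, z - w⟫ := by
  rw [inner_sub_left, inner_feedback_left, inner_feedback_left, ← mul_sub, inner_sub_right,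
    mul_comm]
  exact sub_mul_sub_nonneg_of_monotone hσ _ _

theorem neg_le_inner_feedback_sub (hσ : Monotone σ) (hL : LipschitzWith L σ) (hb : ‖b‖ = 1)
    {z w v : E} {d m : ℝ} (hd : 0 ≤ d) (h : ‖z - d • v - w‖ ≤ m * d) :
    -(m ^ 2 * L * d / 4) ≤ ⟪feedback σ b z - feedback σ b w, v⟫ := by
  rw [inner_sub_left, inner_feedback_left, inner_feedback_left, ← mul_sub]
  refine neg_le_mul_sub_of_abs_sub_le hσ hL hd ((le_of_eq ?_).trans
    ((abs_inner_le_norm_of_norm_eq_one hb _).trans h))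
  rw [inner_sub_right, inner_sub_right, real_inner_smul_right]

theorem inner_intervalIntegral_left [CompleteSpace E] {F : ℝ → E} {t₀ t₁ : ℝ}
    (hF : IntervalIntegrable F volume t₀ t₁) (v : E) :
    ⟪∫ s in t₀..t₁, F s, v⟫ = ∫ s in t₀..t₁, ⟪F s, v⟫ := by
  have hcomm := (innerSL ℝ v).intervalIntegral_comp_comm hF
  simp only [innerSL_apply_apply] at hcomm
  rw [real_inner_comm, ← hcomm]
  simp_rw [real_inner_comm]

end Feedback

section Averaging

variable {σ : ℝ → ℝ} {L : NNReal} {M ε : ℝ}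

theorem inner_bvp (ε t : ℝ) (v : E2) :
    ⟪bvp ε t, v⟫ = sin (2 * π * t / ε) * v 0 + cos (2 * π * t / ε) * v 1 := by
  simp [bvp, PiLp.inner_apply, Fin.sum_univ_two, mul_comm]

theorem norm_bvp (ε t : ℝ) : ‖bvp ε t‖ = 1 := by
  rw [EuclideanSpace.norm_eq]
  simp [bvp, Fin.sum_univ_two]

theorem continuous_bvp (ε : ℝ) : Continuous (bvp ε) := by
  refine (PiLp.continuous_toLp 2 _).comp (continuous_pi fun i => ?_)
  fin_cases i
  · change Continuous fun t => sin (2 * π * t / ε)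
    fun_prop
  · change Continuous fun t => cos (2 * π * t / ε)
    fun_prop

theorem integral_comp_angle_of_periodic {g : ℝ → ℝ} (hg : Function.Periodic g (2 * π))
    (hε : 0 < ε) (t : ℝ) :
    ∫ s in t..(t + ε), g (2 * π * s / ε) = ε / (2 * π) * ∫ θ in (0 : ℝ)..(2 * π), g θ := by
  have hend : 2 * π / ε * (t + ε) = 2 * π / ε * t + 2 * π := by field_simp
  simp_rw [mul_div_right_comm (2 * π) _ ε]
  rw [intervalIntegral.integral_comp_mul_left _ (by positivity : 2 * π / ε ≠ 0), hend,
    hg.intervalIntegral_add_eq _ 0, zero_add, smul_eq_mul, inv_div]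

theorem integral_cos_mul_comp_sin (σ : ℝ → ℝ) (r : ℝ) :
    ∫ θ in (0 : ℝ)..(2 * π), cos θ * σ (r * sin θ) = 0 := by
  have hper : Function.Periodic (fun θ => cos θ * σ (r * sin θ)) (2 * π) := fun θ => by simp
  have hreflect := intervalIntegral.integral_comp_sub_left (a := 0) (b := 2 * π)
    (fun θ => cos θ * σ (r * sin θ)) π
  have hshift := hper.intervalIntegral_add_eq (π - 2 * π) 0
  simp only [sin_pi_sub, cos_pi_sub, neg_mul, intervalIntegral.integral_neg, sub_zero]
    at hreflect
  rw [sub_add_cancel, zero_add] at hshift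
  linarith

theorem integral_sin_mul_comp_sin (hσ : Continuous σ) (hodd : Function.Odd σ) (r : ℝ) :
    ∫ θ in (0 : ℝ)..(2 * π), sin θ * σ (r * sin θ) = 2 * π * modSat σ r := by
  have hint : ∀ p q, IntervalIntegrable (fun θ => sin θ * σ (r * sin θ)) volume p q :=
    fun p q => Continuous.intervalIntegrable (by fun_prop) p q
  have hper : Function.Periodic (fun θ => sin θ * σ (r * sin θ)) π := fun θ => by
    simp only [sin_add_pi, mul_neg, hodd _, neg_mul, neg_neg]
  have hhalf : ∫ θ in π..(2 * π), sin θ * σ (r * sin θ) =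
      ∫ θ in (0 : ℝ)..π, sin θ * σ (r * sin θ) := by
    simpa [two_mul] using hper.intervalIntegral_add_eq π 0
  have hquarter : ∫ θ in (π / 2)..π, sin θ * σ (r * sin θ) =
      ∫ θ in (0 : ℝ)..(π / 2), sin θ * σ (r * sin θ) := by
    have := intervalIntegral.integral_comp_sub_left (a := 0) (b := π / 2)
      (fun θ => sin θ * σ (r * sin θ)) π
    simpa [sin_pi_sub, sub_half] using this.symm
  rw [← integral_add_adjacent_intervals (hint 0 π) (hint π (2 * π)), hhalf,
    ← integral_add_adjacent_intervals (hint 0 (π / 2)) (hint (π / 2) π), hquarter, modSat,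
    ← mul_assoc, mul_div_left_comm, mul_div_assoc, div_self pi_ne_zero]
  ring

theorem exists_polar_coordinates (z : E2) : ∃ α : ℝ, z 0 = ‖z‖ * cos α ∧ z 1 = ‖z‖ * sin α := by
  have hnorm : ‖(⟨z 0, z 1⟩ : ℂ)‖ = ‖z‖ := by
    rw [EuclideanSpace.norm_eq, Complex.norm_def, Complex.normSq_apply, Fin.sum_univ_two]
    simp only [Real.norm_eq_abs, sq_abs, ← sq]
  refine ⟨Complex.arg ⟨z 0, z 1⟩, ?_, ?_⟩
  · rw [← hnorm, Complex.norm_mul_cos_arg]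
  · rw [← hnorm, Complex.norm_mul_sin_arg]

theorem fvec_eq_radialField (σ : ℝ → ℝ) : fvec σ = radialField (modSat σ) := by
  funext z
  rw [fvec, radialField]
  split_ifs with hz
  · rw [hz, smul_zero]
  · rfl

theorem integral_angle_eq_inner_fvec (hσ : Continuous σ) (hodd : Function.Odd σ) (z v : E2) :
    ∫ θ in (0 : ℝ)..(2 * π), (sin θ * v 0 + cos θ * v 1) * σ (sin θ * z 0 + cos θ * z 1) =
      2 * π * ⟪fvec σ z, v⟫ := by
  obtain ⟨α, hz0, hz1⟩ := exists_polar_coordinates z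
  set g : ℝ → ℝ := fun θ => (sin θ * v 0 + cos θ * v 1) * σ (sin θ * z 0 + cos θ * z 1) with hg
  have hper : Function.Periodic g (2 * π) := fun θ => by simp [hg]
  have hrotate : ∫ θ in (0 : ℝ)..(2 * π), g θ = ∫ φ in (0 : ℝ)..(2 * π), g (φ - α) := by
    rw [intervalIntegral.integral_comp_sub_right, zero_sub, sub_eq_neg_add (2 * π),
      hper.intervalIntegral_add_eq (-α) 0, zero_add]
  have hcomponents : ∀ φ, g (φ - α) =
      (cos α * v 0 + sin α * v 1) * (sin φ * σ (‖z‖ * sin φ)) +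
        (cos α * v 1 - sin α * v 0) * (cos φ * σ (‖z‖ * sin φ)) := fun φ => by
    have hinner : sin (φ - α) * z 0 + cos (φ - α) * z 1 = ‖z‖ * sin φ := by
      rw [hz0, hz1, sin_sub, cos_sub]
      linear_combination ‖z‖ * sin φ * sin_sq_add_cos_sq α
    rw [hg]
    simp only [hinner]
    rw [sin_sub, cos_sub]
    ring
  have hradial : ‖z‖ * (cos α * v 0 + sin α * v 1) = ⟪z, v⟫ := by
    rw [PiLp.inner_apply, Fin.sum_univ_two]
    simp only [RCLike.inner_apply, conj_trivial, hz0, hz1]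
    ring
  simp_rw [hrotate, hcomponents]
  rw [intervalIntegral.integral_add (Continuous.intervalIntegrable (by fun_prop) _ _)
    (Continuous.intervalIntegrable (by fun_prop) _ _), intervalIntegral.integral_const_mul,
    intervalIntegral.integral_const_mul, integral_sin_mul_comp_sin hσ hodd,
    integral_cos_mul_comp_sin, mul_zero, add_zero, fvec_eq_radialField, radialField,
    real_inner_smul_left, ← hradial]
  rcases eq_or_ne ‖z‖ 0 with hz | hz
  · rw [hz, modSat_zero hodd.map_zero]
    simp
  · field_simp

theorem continuous_feedback_bvp (hσ : Continuous σ) (ε : ℝ) (z : E2) :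
    Continuous fun s => feedback σ (bvp ε s) z := by
  have := continuous_bvp ε
  unfold feedback
  fun_prop

theorem integral_inner_feedback_bvp (hσ : Continuous σ) (hodd : Function.Odd σ) (hε : 0 < ε)
    (t : ℝ) (z v : E2) :
    ∫ s in t..(t + ε), ⟪feedback σ (bvp ε s) z, v⟫ = ε * ⟪fvec σ z, v⟫ := by
  simp_rw [inner_feedback_left, inner_bvp]
  rw [integral_comp_angle_of_periodic
    (g := fun θ => (sin θ * v 0 + cos θ * v 1) * σ (sin θ * z 0 + cos θ * z 1))
    (fun θ => by simp) hε, integral_angle_eq_inner_fvec hσ hodd]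
  field_simp

theorem integral_feedback_bvp (hσ : Continuous σ) (hodd : Function.Odd σ) (hε : 0 < ε)
    (t : ℝ) (z : E2) : ∫ s in t..(t + ε), feedback σ (bvp ε s) z = ε • fvec σ z := by
  refine ext_inner_right ℝ fun v => ?_
  rw [inner_intervalIntegral_left ((continuous_feedback_bvp hσ ε z).intervalIntegrable _ _),
    integral_inner_feedback_bvp hσ hodd hε, real_inner_smul_left]

theorem integral_sq_inner_bvp (hε : 0 < ε) (t : ℝ) (v : E2) :
    ∫ s in t..(t + ε), ⟪bvp ε s, v⟫ ^ 2 = ε / 2 * ‖v‖ ^ 2 := by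
  have havg := integral_inner_feedback_bvp continuous_id (fun _ => rfl) hε t v v
  have hfvec : ⟪fvec id v, v⟫ = ‖v‖ ^ 2 / 2 := by
    rw [fvec_eq_radialField, radialField, modSat_id, real_inner_smul_left,
      real_inner_self_eq_norm_sq]
    rcases eq_or_ne ‖v‖ 0 with hv | hv
    · simp [hv]
    · field_simp
  simp only [inner_feedback_left, id, ← sq, hfvec] at havg
  linarith

theorem fvec_eq_integral (hσ : Continuous σ) (hodd : Function.Odd σ) (z : E2) :
    fvec σ z = ∫ s in (0 : ℝ)..1, feedback σ (bvp 1 s) z := by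
  simpa using (integral_feedback_bvp hσ hodd one_pos 0 z).symm

theorem fvec_sub_eq_integral (hσ : Continuous σ) (hodd : Function.Odd σ) (z w : E2) :
    fvec σ z - fvec σ w =
      ∫ s in (0 : ℝ)..1, (feedback σ (bvp 1 s) z - feedback σ (bvp 1 s) w) := by
  rw [integral_sub ((continuous_feedback_bvp hσ 1 z).intervalIntegrable _ _)
    ((continuous_feedback_bvp hσ 1 w).intervalIntegrable _ _), ← fvec_eq_integral hσ hodd,
    ← fvec_eq_integral hσ hodd]

theorem norm_fvec_le (hσ : Continuous σ) (hodd : Function.Odd σ) (hM : ∀ x, |σ x| ≤ M) (z : E2) :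
    ‖fvec σ z‖ ≤ M := by
  rw [fvec_eq_integral hσ hodd]
  simpa using intervalIntegral.norm_integral_le_of_norm_le_const (a := 0) (b := 1) fun s _ =>
    norm_feedback_le hM (norm_bvp 1 s) z

theorem lipschitzWith_fvec (hL : LipschitzWith L σ) (hodd : Function.Odd σ) :
    LipschitzWith L (fvec σ) :=
  LipschitzWith.of_dist_le_mul fun z w => by
    rw [dist_eq_norm, fvec_sub_eq_integral hL.continuous hodd]
    refine (intervalIntegral.norm_integral_le_of_norm_le_const (C := L * dist z w)
      fun s _ => ?_).trans (by simp)
    rw [← dist_eq_norm]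
    exact (lipschitzWith_feedback hL (norm_bvp 1 s)).dist_le_mul z w

theorem le_inner_fvec_sub (hσ : Continuous σ) (hodd : Function.Odd σ) {z w v : E2} {c : ℝ}
    (h : ∀ b : E2, ‖b‖ = 1 → c ≤ ⟪feedback σ b z - feedback σ b w, v⟫) :
    c ≤ ⟪fvec σ z - fvec σ w, v⟫ := by
  have hcont : Continuous fun s => feedback σ (bvp 1 s) z - feedback σ (bvp 1 s) w :=
    (continuous_feedback_bvp hσ 1 z).sub (continuous_feedback_bvp hσ 1 w)
  rw [fvec_sub_eq_integral hσ hodd, inner_intervalIntegral_left (hcont.intervalIntegrable _ _)]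
  have hmono := integral_mono_on (zero_le_one' ℝ) (intervalIntegrable_const (μ := volume))
    ((hcont.inner continuous_const).intervalIntegrable 0 1)
    fun s _ => h (bvp 1 s) (norm_bvp 1 s)
  simpa using hmono

theorem inner_fvec_sub_nonneg (hσ : Continuous σ) (hodd : Function.Odd σ) (hmono : Monotone σ)
    (z w : E2) : 0 ≤ ⟪fvec σ z - fvec σ w, z - w⟫ :=
  le_inner_fvec_sub hσ hodd fun b _ => inner_feedback_sub_nonneg hmono b z w

theorem neg_le_inner_fvec_sub (hmono : Monotone σ) (hL : LipschitzWith L σ)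
    (hodd : Function.Odd σ) {z w v : E2} {d m : ℝ} (hd : 0 ≤ d)
    (h : ‖z - d • v - w‖ ≤ m * d) :
    -(m ^ 2 * L * d / 4) ≤ ⟪fvec σ z - fvec σ w, v⟫ :=
  le_inner_fvec_sub hL.continuous hodd fun _ hb => neg_le_inner_feedback_sub hmono hL hb hd h

end Averaging

theorem norm_sub_le_of_lipschitzWith_of_map_zero {E : Type*} [NormedAddCommGroup E]
    [NormedSpace ℝ E] {v : ℝ → E → E} {K : NNReal} (hv : ∀ t, LipschitzWith K (v t))
    (h0 : ∀ t, v t 0 = 0) {p : ℝ → E} {t₀ t₁ : ℝ}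
    (hp : ∀ t ∈ Set.Icc t₀ t₁, HasDerivAt p (v t (p t)) t) (hK : K * (t₁ - t₀) ≤ 1) {s : ℝ}
    (hs : s ∈ Set.Icc t₀ t₁) : ‖p s - p t₀‖ ≤ 3 * K * ‖p t₀‖ * (s - t₀) := by
  have hcont : ContinuousOn p (Set.Icc t₀ t₁) :=
    fun t ht => (hp t ht).continuousAt.continuousWithinAt
  have hgronwall : ∀ t ∈ Set.Icc t₀ t₁, ‖p t‖ ≤ 3 * ‖p t₀‖ := fun t ht => by
    have hdist := dist_le_of_trajectories_ODE (δ := ‖p t₀‖) hv hcont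
      (fun r hr => (hp r (Set.Ico_subset_Icc_self hr)).hasDerivWithinAt)
      (g := fun _ => (0 : E)) continuousOn_const
      (fun r _ => by simpa only [h0] using hasDerivWithinAt_const r _ (0 : E))
      (dist_zero_right _).le t ht
    have hexp : exp (K * (t - t₀)) ≤ 3 :=
      (exp_le_exp.2 ((by gcongr; exact ht.2 : K * (t - t₀) ≤ K * (t₁ - t₀)).trans hK)).trans
        exp_one_lt_three.le
    rw [dist_zero_right] at hdist
    calc ‖p t‖ ≤ ‖p t₀‖ * exp (K * (t - t₀)) := hdist
      _ ≤ ‖p t₀‖ * 3 := by gcongr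
      _ = 3 * ‖p t₀‖ := mul_comm _ _
  refine norm_image_sub_le_of_norm_deriv_le_segment'
    (fun t ht => (hp t ht).hasDerivWithinAt) (fun t ht => ?_) s hs
  have hlip := (hv t).dist_le_mul (p t) 0
  rw [h0, dist_zero_right, dist_zero_right] at hlip
  calc ‖v t (p t)‖ ≤ K * ‖p t‖ := hlip
    _ ≤ K * (3 * ‖p t₀‖) := by gcongr; exact hgronwall t (Set.Ico_subset_Icc_self ht)
    _ = 3 * K * ‖p t₀‖ := by ring

/-- The right-hand side of `(T_ε)` as a time-dependent vector field in `(z, y)`. -/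
def tepsField (σ : ℝ → ℝ) (ε t : ℝ) (p : E2 × E2) : E2 × E2 :=
  (p.2 - feedback σ (bvp ε t) p.1, -feedback σ (bvp ε t) p.1)

theorem tepsField_zero {σ : ℝ → ℝ} (h0 : σ 0 = 0) (ε t : ℝ) : tepsField σ ε t 0 = 0 := by
  simp [tepsField, feedback, h0]

theorem lipschitzWith_tepsField {σ : ℝ → ℝ} {L : NNReal} (hL : LipschitzWith L σ) (ε t : ℝ) :
    LipschitzWith (1 + L) (tepsField σ ε t) := by
  have hfb : LipschitzWith (L * 1) fun p : E2 × E2 => feedback σ (bvp ε t) p.1 :=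
    (lipschitzWith_feedback hL (norm_bvp ε t)).comp LipschitzWith.prod_fst
  rw [mul_one] at hfb
  exact ((LipschitzWith.prod_snd.sub hfb).prodMk hfb.neg).weaken
    (max_le le_rfl (le_add_of_nonneg_left zero_le_one))

namespace IsSolTeps

variable {σ : ℝ → ℝ} {L : NNReal} {M ε s t : ℝ} {z y : ℝ → E2}

theorem hasDerivAt_fst (hs : IsSolTeps σ ε z y) (ht : 0 ≤ t) :
    HasDerivAt z (y t - feedback σ (bvp ε t) (z t)) t :=
  (hs t ht).1

theorem hasDerivAt_snd (hs : IsSolTeps σ ε z y) (ht : 0 ≤ t) :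
    HasDerivAt y (-feedback σ (bvp ε t) (z t)) t :=
  (hs t ht).2.congr_deriv (neg_smul _ _)

theorem hasDerivAt_prodMk (hs : IsSolTeps σ ε z y) (ht : 0 ≤ t) :
    HasDerivAt (fun t => (z t, y t)) (tepsField σ ε t (z t, y t)) t :=
  (hs.hasDerivAt_fst ht).prodMk (hs.hasDerivAt_snd ht)

theorem continuousOn_fst (hs : IsSolTeps σ ε z y) : ContinuousOn z (Set.Ici 0) :=
  fun _ ht => (hs.hasDerivAt_fst ht).continuousAt.continuousWithinAt

theorem continuousOn_snd (hs : IsSolTeps σ ε z y) : ContinuousOn y (Set.Ici 0) :=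
  fun _ ht => (hs.hasDerivAt_snd ht).continuousAt.continuousWithinAt

theorem eq_of_eq_zero (hL : LipschitzWith L σ) {z' y' : ℝ → E2} (hs : IsSolTeps σ ε z y)
    (hs' : IsSolTeps σ ε z' y') (hz : z 0 = z' 0) (hy : y 0 = y' 0) (ht : 0 ≤ t) :
    z t = z' t ∧ y t = y' t := by
  have hunique := ODE_solution_unique (fun r => lipschitzWith_tepsField hL ε r)
    (hs.continuousOn_fst.prodMk hs.continuousOn_snd |>.mono Set.Icc_subset_Ici_self)
    (fun r hr => (hs.hasDerivAt_prodMk hr.1).hasDerivWithinAt)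
    (hs'.continuousOn_fst.prodMk hs'.continuousOn_snd |>.mono Set.Icc_subset_Ici_self)
    (fun r hr => (hs'.hasDerivAt_prodMk hr.1).hasDerivWithinAt)
    (Prod.ext hz hy) (Set.right_mem_Icc.2 ht)
  exact Prod.mk.inj hunique

theorem norm_prodMk_sub_le (hL : LipschitzWith L σ) (h0 : σ 0 = 0) (hs : IsSolTeps σ ε z y)
    (ht : 0 ≤ t) (hst : t ≤ s) (hshort : (1 + L) * (s - t) ≤ 1) :
    ‖(z s, y s) - (z t, y t)‖ ≤ 3 * (1 + L) * ‖(z t, y t)‖ * (s - t) :=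
  norm_sub_le_of_lipschitzWith_of_map_zero (K := 1 + L) (lipschitzWith_tepsField hL ε)
    (tepsField_zero h0 ε) (fun _ hr => hs.hasDerivAt_prodMk (ht.trans hr.1)) hshort
    (Set.right_mem_Icc.2 hst)

theorem norm_snd_sub_le (hM : ∀ x, |σ x| ≤ M) (hs : IsSolTeps σ ε z y) (ht : 0 ≤ t)
    (hst : t ≤ s) : ‖y s - y t‖ ≤ M * (s - t) :=
  norm_image_sub_le_of_norm_deriv_le_segment'
    (fun _ hr => (hs.hasDerivAt_snd (ht.trans hr.1)).hasDerivWithinAt)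
    (fun r _ => by
      rw [norm_neg]
      exact norm_feedback_le hM (norm_bvp ε r) _)
    s (Set.right_mem_Icc.2 hst)

theorem norm_fst_sub_smul_snd_sub_le (hM : ∀ x, |σ x| ≤ M) (hs : IsSolTeps σ ε z y) (ht : 0 ≤ t)
    (hst : t ≤ s) (hst' : s ≤ t + 1) : ‖z s - (s - t) • y s - z t‖ ≤ M * (s - t) := by
  have hderiv : ∀ r ∈ Set.Icc t s, HasDerivAt (fun r => z r - (r - t) • y r)
      (((r - t) - 1) • feedback σ (bvp ε r) (z r)) r := fun r hr => by
    have hr0 := ht.trans hr.1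
    refine ((hs.hasDerivAt_fst hr0).sub
      (((hasDerivAt_id r).sub_const t).smul (hs.hasDerivAt_snd hr0))).congr_deriv ?_
    simp only [id]
    module
  have hbound : ∀ r ∈ Set.Ico t s, ‖((r - t) - 1) • feedback σ (bvp ε r) (z r)‖ ≤ M :=
    fun r hr => by
      rw [norm_smul, Real.norm_eq_abs]
      have habs : |(r - t) - 1| ≤ 1 := abs_le.2 ⟨by linarith [hr.1], by linarith [hr.2]⟩
      exact (mul_le_of_le_one_left (norm_nonneg _) habs).trans
        (norm_feedback_le hM (norm_bvp ε r) _)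
  simpa using norm_image_sub_le_of_norm_deriv_le_segment'
    (fun r hr => (hderiv r hr).hasDerivWithinAt) hbound s (Set.right_mem_Icc.2 hst)

theorem norm_fst_sub_le (hM : ∀ x, |σ x| ≤ M) (hs : IsSolTeps σ ε z y) (ht : 0 ≤ t)
    (hst : t ≤ s) (hst' : s ≤ t + 1) : ‖z s - z t‖ ≤ (s - t) * (‖y t‖ + 2 * M) := by
  have hst0 : 0 ≤ s - t := sub_nonneg.2 hst
  have hM0 : 0 ≤ M := (abs_nonneg _).trans (hM 0)
  have hy : ‖y s‖ ≤ ‖y t‖ + M := by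
    have := hs.norm_snd_sub_le hM ht hst
    linarith [norm_le_norm_add_norm_sub' (y s) (y t),
      mul_le_of_le_one_right hM0 (by linarith : s - t ≤ 1)]
  calc ‖z s - z t‖ = ‖(z s - (s - t) • y s - z t) + (s - t) • y s‖ := by congr 1; abel
    _ ≤ ‖z s - (s - t) • y s - z t‖ + (s - t) * ‖y s‖ := by
      simpa only [norm_smul, Real.norm_of_nonneg hst0] using
        norm_add_le (z s - (s - t) • y s - z t) ((s - t) • y s)
    _ ≤ M * (s - t) + (s - t) * (‖y t‖ + M) := by
      gcongr
      exact hs.norm_fst_sub_smul_snd_sub_le hM ht hst hst'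
    _ = (s - t) * (‖y t‖ + 2 * M) := by ring

end IsSolTeps

section Lyapunov

variable {σ : ℝ → ℝ} {L : NNReal} {M ε : ℝ}

theorem continuous_fvec (hL : LipschitzWith L σ) (hodd : Function.Odd σ) : Continuous (fvec σ) :=
  (lipschitzWith_fvec hL hodd).continuous

/-- The part of `-d/dt V₀` along `(T_ε)` which is non-negative at every state `(z, y)`, for the
current feedback direction `b`. -/
def dissipation (σ : ℝ → ℝ) (b z y : E2) : ℝ :=
  ⟪fvec σ z - fvec σ (z - y), y⟫ + ⟪fvec σ z, feedback σ b z⟫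

/-- The remaining part of `d/dt V₀`, up to a factor `2`: the effect of applying the feedback in the
direction `b` instead of its mean `fvec σ` over a period. -/
def averagingError (σ : ℝ → ℝ) (b z y : E2) : ℝ :=
  ⟪fvec σ z - feedback σ b z, y⟫

theorem continuous_dissipation (hL : LipschitzWith L σ) (hodd : Function.Odd σ) :
    Continuous fun p : E2 × E2 × E2 => dissipation σ p.1 p.2.1 p.2.2 := by
  have hf := continuous_fvec hL hodd
  have hσ := hL.continuous
  unfold dissipation feedback
  fun_prop

theorem continuous_averagingError (hL : LipschitzWith L σ) (hodd : Function.Odd σ) :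
    Continuous fun p : E2 × E2 × E2 => averagingError σ p.1 p.2.1 p.2.2 := by
  have hf := continuous_fvec hL hodd
  have hσ := hL.continuous
  unfold averagingError feedback
  fun_prop

theorem inner_fvec_feedback (σ : ℝ → ℝ) (b z : E2) :
    ⟪fvec σ z, feedback σ b z⟫ = modSat σ ‖z‖ / ‖z‖ * (⟪b, z⟫ * σ ⟪b, z⟫) := by
  rw [fvec_eq_radialField, radialField, real_inner_smul_left, real_inner_comm,
    inner_feedback_left]

theorem integral_averagingError_eq_zero (hσ : Continuous σ) (hodd : Function.Odd σ) (hε : 0 < ε)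
    (t : ℝ) (z y : E2) : ∫ s in t..(t + ε), averagingError σ (bvp ε s) z y = 0 := by
  have hcont : Continuous fun s => ⟪feedback σ (bvp ε s) z, y⟫ :=
    (continuous_feedback_bvp hσ ε z).inner continuous_const
  simp_rw [averagingError, inner_sub_left]
  rw [integral_sub intervalIntegrable_const (hcont.intervalIntegrable _ _),
    integral_inner_feedback_bvp hσ hodd hε, intervalIntegral.integral_const]
  simp

namespace IsConcaveSaturation

theorem inner_fvec_feedback_nonneg (h : IsConcaveSaturation σ L M) (b z : E2) :
    0 ≤ ⟪fvec σ z, feedback σ b z⟫ := by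
  rw [inner_fvec_feedback]
  exact mul_nonneg (div_nonneg (h.modSat_nonneg (norm_nonneg z)) (norm_nonneg z))
    (h.mul_self_nonneg _)

theorem inner_fvec_feedback_le_dissipation (h : IsConcaveSaturation σ L M) (b z y : E2) :
    ⟪fvec σ z, feedback σ b z⟫ ≤ dissipation σ b z y := by
  have := inner_fvec_sub_nonneg h.continuous h.odd h.monotone z (z - y)
  rw [sub_sub_cancel] at this
  exact le_add_of_nonneg_left this

theorem dissipation_nonneg (h : IsConcaveSaturation σ L M) (b z y : E2) :
    0 ≤ dissipation σ b z y :=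
  (h.inner_fvec_feedback_nonneg b z).trans (h.inner_fvec_feedback_le_dissipation b z y)

end IsConcaveSaturation

namespace IsSolTeps

variable {s t : ℝ} {z y : ℝ → E2}

theorem hasDerivAt_V0 (hL : LipschitzWith L σ) (hodd : Function.Odd σ)
    (hs : IsSolTeps σ ε z y) (ht : 0 ≤ t) :
    HasDerivAt (fun t => V0 σ (z t) (y t)) (-dissipation σ (bvp ε t) (z t) (y t)
      + 2 * averagingError σ (bvp ε t) (z t) (y t)) t := by
  have hS := continuous_modSat hL.continuous
  have hS0 := modSat_zero hodd.map_zero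
  have hz := hs.hasDerivAt_fst ht
  have hy := hs.hasDerivAt_snd ht
  refine ((hy.norm_sq.add (hasDerivAt_integral_norm hS hS0 hz)).add
    (hasDerivAt_integral_norm hS hS0 (hz.sub hy))).congr_deriv ?_
  simp only [dissipation, averagingError, fvec_eq_radialField, inner_sub_right,
    inner_neg_right, Pi.sub_apply, real_inner_comm (y t)]
  ring

theorem intervalIntegrable_along (hs : IsSolTeps σ ε z y) {F : E2 × E2 × E2 → ℝ}
    (hF : Continuous F) (ht : 0 ≤ t) (hst : t ≤ s) :
    IntervalIntegrable (fun t => F (bvp ε t, z t, y t)) volume t s :=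
  ((hF.comp_continuousOn ((continuous_bvp ε).continuousOn.prodMk
    (hs.continuousOn_fst.prodMk hs.continuousOn_snd))).mono
    (Set.Icc_subset_Ici_self.trans (Set.Ici_subset_Ici.2 ht))).intervalIntegrable_of_Icc hst

theorem intervalIntegrable_dissipation (hL : LipschitzWith L σ) (hodd : Function.Odd σ)
    (hs : IsSolTeps σ ε z y) (ht : 0 ≤ t) (hst : t ≤ s) :
    IntervalIntegrable (fun r => dissipation σ (bvp ε r) (z r) (y r)) volume t s :=
  hs.intervalIntegrable_along (continuous_dissipation hL hodd) ht hst

theorem intervalIntegrable_averagingError (hL : LipschitzWith L σ) (hodd : Function.Odd σ)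
    (hs : IsSolTeps σ ε z y) (ht : 0 ≤ t) (hst : t ≤ s) :
    IntervalIntegrable (fun r => averagingError σ (bvp ε r) (z r) (y r)) volume t s :=
  hs.intervalIntegrable_along (continuous_averagingError hL hodd) ht hst

theorem V0_sub_eq_integral (hL : LipschitzWith L σ) (hodd : Function.Odd σ)
    (hs : IsSolTeps σ ε z y) (ht : 0 ≤ t) (hst : t ≤ s) :
    V0 σ (z s) (y s) - V0 σ (z t) (y t) =
      -(∫ r in t..s, dissipation σ (bvp ε r) (z r) (y r))
        + 2 * ∫ r in t..s, averagingError σ (bvp ε r) (z r) (y r) := by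
  have hdis : IntervalIntegrable (fun r => -dissipation σ (bvp ε r) (z r) (y r)) volume t s :=
    (hs.intervalIntegrable_dissipation hL hodd ht hst).neg
  have herr := hs.intervalIntegrable_averagingError hL hodd ht hst
  have hftc := integral_eq_sub_of_hasDerivAt
    (fun r hr => hs.hasDerivAt_V0 hL hodd (ht.trans (Set.uIcc_of_le hst ▸ hr).1))
    (hdis.add (herr.const_mul 2))
  rw [← hftc, intervalIntegral.integral_add hdis (herr.const_mul 2),
    intervalIntegral.integral_const_mul, intervalIntegral.integral_neg]

/-- The averaging error has mean zero over a period at a frozen state, so only its variation along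
the solution matters. -/
theorem V0_add_period_sub_le (hL : LipschitzWith L σ) (hodd : Function.Odd σ)
    (hs : IsSolTeps σ ε z y) (hε : 0 < ε) (ht : 0 ≤ t) {A : ℝ}
    (hA : ∀ s ∈ Set.Icc t (t + ε), averagingError σ (bvp ε s) (z s) (y s) ≤
      averagingError σ (bvp ε s) (z t) (y t) + A) :
    V0 σ (z (t + ε)) (y (t + ε)) - V0 σ (z t) (y t) ≤
      -(∫ s in t..(t + ε), dissipation σ (bvp ε s) (z s) (y s)) + 2 * (ε * A) := by
  have htε : t ≤ t + ε := by linarith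
  have hfrozen : IntervalIntegrable (fun s => averagingError σ (bvp ε s) (z t) (y t)) volume
      t (t + ε) :=
    ((continuous_averagingError hL hodd).comp ((continuous_bvp ε).prodMk
      (continuous_const (y := (z t, y t))))).intervalIntegrable _ _
  have hmono := integral_mono_on htε (hs.intervalIntegrable_averagingError hL hodd ht htε)
    (hfrozen.add intervalIntegrable_const) hA
  rw [intervalIntegral.integral_add hfrozen intervalIntegrable_const,
    integral_averagingError_eq_zero hL.continuous hodd hε, intervalIntegral.integral_const,
    zero_add, add_sub_cancel_left, smul_eq_mul] at hmono
  rw [hs.V0_sub_eq_integral hL hodd ht htε]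
  linarith

theorem le_integral_sq_inner (hs : IsSolTeps σ ε z y) (hε : 0 < ε) (ht : 0 ≤ t) {δ : ℝ}
    (hδ : ∀ s ∈ Set.Icc t (t + ε), ‖z s - z t‖ ≤ δ) :
    ε * (‖z t‖ ^ 2 / 4 - δ ^ 2) ≤ ∫ s in t..(t + ε), ⟪bvp ε s, z s⟫ ^ 2 := by
  have htε : t ≤ t + ε := by linarith
  have hfrozen : IntervalIntegrable (fun s => ⟪bvp ε s, z t⟫ ^ 2 / 2) volume t (t + ε) :=
    ((((continuous_bvp ε).inner continuous_const).pow 2).div_const 2).intervalIntegrable _ _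
  have hmono := integral_mono_on htε (hfrozen.sub (intervalIntegrable_const (c := δ ^ 2)))
    (hs.intervalIntegrable_along (F := fun p => ⟪p.1, p.2.1⟫ ^ 2) (by fun_prop) ht htε)
    fun s hs' => half_sq_sub_sq_le_sq (by
      rw [← inner_sub_right]
      exact (abs_inner_le_norm_of_norm_eq_one (norm_bvp ε s) _).trans (hδ s hs'))
  rw [integral_sub hfrozen intervalIntegrable_const, intervalIntegral.integral_div,
    integral_sq_inner_bvp hε, intervalIntegral.integral_const, add_sub_cancel_left,
    smul_eq_mul] at hmono
  linarith

end IsSolTeps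

end Lyapunov

section Attraction

variable {σ : ℝ → ℝ} {L : NNReal} {M ε : ℝ}

namespace IsConcaveSaturation

theorem integral_modSat_nonneg (h : IsConcaveSaturation σ L M) {r : ℝ} (hr : 0 ≤ r) :
    0 ≤ ∫ ξ in (0 : ℝ)..r, modSat σ ξ :=
  intervalIntegral.integral_nonneg hr fun _ hξ => h.modSat_nonneg hξ.1

theorem sq_norm_le_V0 (h : IsConcaveSaturation σ L M) (z y : E2) : ‖y‖ ^ 2 ≤ V0 σ z y := by
  have hz := h.integral_modSat_nonneg (norm_nonneg z)
  have hzy := h.integral_modSat_nonneg (norm_nonneg (z - y))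
  unfold V0
  linarith

theorem div_mul_sq_le_inner_fvec_feedback (h : IsConcaveSaturation σ L M) {b z : E2}
    (hb : ‖b‖ = 1) {ρ : ℝ} (hρ : 0 < ρ) (hz : ‖z‖ ≤ ρ) :
    modSat σ ‖z‖ / ‖z‖ * (σ ρ / ρ * ⟪b, z⟫ ^ 2) ≤ ⟪fvec σ z, feedback σ b z⟫ := by
  rw [inner_fvec_feedback]
  exact mul_le_mul_of_nonneg_left (div_mul_sq_le_mul_of_concaveOn_of_odd h.concaveOn h.odd hρ
    ((abs_inner_le_norm_of_norm_eq_one hb z).trans hz))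
    (div_nonneg (h.modSat_nonneg (norm_nonneg z)) (norm_nonneg z))

theorem div_sq_mul_sq_le_dissipation (h : IsConcaveSaturation σ L M) {b z : E2} (hb : ‖b‖ = 1)
    (y : E2) {a ρ : ℝ} (ha : 0 < a) (haz : a ≤ ‖z‖) (hz : ‖z‖ ≤ ρ) :
    modSat σ a * σ a / ρ ^ 2 * ⟪b, z⟫ ^ 2 ≤ dissipation σ b z y := by
  have hz0 : 0 < ‖z‖ := ha.trans_le haz
  have hρ : 0 < ρ := hz0.trans_le hz
  have hσa : 0 < σ a := h.pos a ha
  have hσρ : σ a ≤ σ ρ := h.monotone (haz.trans hz)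
  have hSz0 : 0 ≤ modSat σ ‖z‖ := h.modSat_nonneg (norm_nonneg z)
  have hSz : modSat σ a ≤ modSat σ ‖z‖ := h.monotoneOn_modSat ha.le (norm_nonneg z) haz
  have hSa : 0 < modSat σ a := h.modSat_pos ha
  calc modSat σ a * σ a / ρ ^ 2 * ⟪b, z⟫ ^ 2
      = modSat σ a / ρ * (σ a / ρ * ⟪b, z⟫ ^ 2) := by field_simp
    _ ≤ modSat σ ‖z‖ / ‖z‖ * (σ ρ / ρ * ⟪b, z⟫ ^ 2) := by gcongr
    _ ≤ ⟪fvec σ z, feedback σ b z⟫ := h.div_mul_sq_le_inner_fvec_feedback hb hρ hz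
    _ ≤ dissipation σ b z y := h.inner_fvec_feedback_le_dissipation b z y

end IsConcaveSaturation

/-- `V₀` minus `2ε⟪f(z), y⟫`. This first-order correction in `ε` absorbs the averaging error up to
`O(ε²)` uniformly in the state, whereas that of `V₀` grows with `‖y‖`. -/
def correctedV0 (σ : ℝ → ℝ) (ε : ℝ) (z y : E2) : ℝ :=
  V0 σ z y - 2 * ε * ⟪fvec σ z, y⟫

theorem neg_sq_le_correctedV0 (h : IsConcaveSaturation σ L M) (hε : 0 ≤ ε) (z y : E2) :
    -(ε * M) ^ 2 ≤ correctedV0 σ ε z y := by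
  have hinner : ⟪fvec σ z, y⟫ ≤ M * ‖y‖ :=
    (real_inner_le_norm _ _).trans (mul_le_mul_of_nonneg_right
      (norm_fvec_le h.continuous h.odd h.abs_le z) (norm_nonneg y))
  unfold correctedV0
  nlinarith [h.sq_norm_le_V0 z y, mul_le_mul_of_nonneg_left hinner hε, sq_nonneg (‖y‖ - ε * M)]

/-- A lower bound for the mean dissipation over a period starting in a slow state. -/
def slowDissipation (σ : ℝ → ℝ) : ℝ := modSat σ (1 / 2) * σ (1 / 2) / 10

theorem slowDissipation_pos (h : IsConcaveSaturation σ L M) : 0 < slowDissipation σ :=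
  div_pos (mul_pos (h.modSat_pos one_half_pos) (h.pos _ one_half_pos)) (by norm_num)

/-- The states from which solutions of `(T_ε)` move by at most a quarter of `‖z‖` during a period,
so that `z` can be treated as constant there. -/
def IsSlowState (M ε : ℝ) (z y : E2) : Prop :=
  1 + 4 * ε * (‖y‖ + 2 * M) ≤ ‖z‖

theorem le_norm_snd_of_not_isSlowState {z y : E2} (hM : 0 ≤ M) (hε1 : ε ≤ 1 / 100)
    (hout : 12 + 9 * M < ‖(z, y)‖) (hfast : ¬IsSlowState M ε z y) : 12 + 9 * M ≤ ‖y‖ := by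
  by_contra! hy
  have hz := (lt_max_iff.1 hout).resolve_right hy.not_gt
  have hεy : ε * (‖y‖ + 2 * M) ≤ 1 / 100 * (12 + 9 * M + 2 * M) := by gcongr
  refine hfast ?_
  unfold IsSlowState
  linarith

namespace IsSolTeps

variable {s t : ℝ} {z y : ℝ → E2}

theorem neg_le_inner_sub_inner {g : E2 → E2} {K : ℝ} (hgM : ∀ w, ‖g w‖ ≤ M)
    (hgK : ∀ {w w' v : E2} {d : ℝ}, 0 ≤ d → ‖w - d • v - w'‖ ≤ M * d →
      -(K * d) ≤ ⟪g w - g w', v⟫)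
    (hM : ∀ x, |σ x| ≤ M) (hs : IsSolTeps σ ε z y) (ht : 0 ≤ t) (hst : t ≤ s)
    (hst' : s ≤ t + 1) :
    -((K + M ^ 2) * (s - t)) ≤ ⟪g (z s), y s⟫ - ⟪g (z t), y t⟫ := by
  have hz := hgK (sub_nonneg.2 hst) (hs.norm_fst_sub_smul_snd_sub_le hM ht hst hst')
  have hy : -(M ^ 2 * (s - t)) ≤ ⟪g (z t), y s - y t⟫ := by
    refine (neg_le_neg ?_).trans (neg_le_of_abs_le (abs_real_inner_le_norm _ _))
    calc ‖g (z t)‖ * ‖y s - y t‖ ≤ M * (M * (s - t)) :=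
          mul_le_mul (hgM _) (hs.norm_snd_sub_le hM ht hst) (norm_nonneg _)
            ((norm_nonneg _).trans (hgM 0))
      _ = M ^ 2 * (s - t) := by ring
  rw [inner_sub_left] at hz
  rw [inner_sub_right] at hy
  linarith

theorem averagingError_le (h : IsConcaveSaturation σ L M) (hs : IsSolTeps σ ε z y) (hε1 : ε ≤ 1)
    (ht : 0 ≤ t) (hst : s ∈ Set.Icc t (t + ε)) :
    averagingError σ (bvp ε s) (z s) (y s) ≤ averagingError σ (bvp ε s) (z t) (y t) +
      (⟪fvec σ (z (t + ε)), y (t + ε)⟫ - ⟪fvec σ (z t), y t⟫ + (M ^ 2 * L / 4 + M ^ 2) * ε) := by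
  have hfeedback := hs.neg_le_inner_sub_inner (K := M ^ 2 * L / 4)
    (norm_feedback_le h.abs_le (norm_bvp ε s))
    (fun hd hw => le_of_eq_of_le (by ring)
      (neg_le_inner_feedback_sub h.monotone h.lipschitz (norm_bvp ε s) hd hw))
    h.abs_le ht hst.1 (by linarith [hst.2])
  have hfvec := hs.neg_le_inner_sub_inner (K := M ^ 2 * L / 4)
    (norm_fvec_le h.continuous h.odd h.abs_le)
    (fun hd hw => le_of_eq_of_le (by ring)
      (neg_le_inner_fvec_sub h.monotone h.lipschitz h.odd hd hw))
    h.abs_le (ht.trans hst.1) hst.2 (by linarith [hst.1])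
  simp only [averagingError, inner_sub_left]
  linarith

theorem correctedV0_add_period_le (h : IsConcaveSaturation σ L M) (hs : IsSolTeps σ ε z y)
    (hε : 0 < ε) (hε1 : ε ≤ 1) (ht : 0 ≤ t) :
    correctedV0 σ ε (z (t + ε)) (y (t + ε)) ≤ correctedV0 σ ε (z t) (y t)
      - (∫ s in t..(t + ε), dissipation σ (bvp ε s) (z s) (y s))
      + 2 * (M ^ 2 * L / 4 + M ^ 2) * ε ^ 2 := by
  have hV := hs.V0_add_period_sub_le h.lipschitz h.odd hε ht
    fun s hst => hs.averagingError_le h hε1 ht hst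
  unfold correctedV0
  linarith

theorem norm_fst_sub_le_quarter (hM : ∀ x, |σ x| ≤ M) (hs : IsSolTeps σ ε z y) (hε1 : ε ≤ 1)
    (ht : 0 ≤ t) (hslow : IsSlowState M ε (z t) (y t)) (hst : s ∈ Set.Icc t (t + ε)) :
    ‖z s - z t‖ ≤ ‖z t‖ / 4 := by
  have hM0 : 0 ≤ M := (abs_nonneg _).trans (hM 0)
  have hspeed : (s - t) * (‖y t‖ + 2 * M) ≤ ε * (‖y t‖ + 2 * M) := by
    gcongr
    linarith [hst.2]
  unfold IsSlowState at hslow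
  linarith [hs.norm_fst_sub_le hM ht hst.1 (by linarith [hst.2])]

theorem le_integral_dissipation (h : IsConcaveSaturation σ L M) (hs : IsSolTeps σ ε z y)
    (hε : 0 < ε) (hε1 : ε ≤ 1) (ht : 0 ≤ t) (hslow : IsSlowState M ε (z t) (y t)) :
    slowDissipation σ * ε ≤ ∫ s in t..(t + ε), dissipation σ (bvp ε s) (z s) (y s) := by
  have hquarter := fun s hst => hs.norm_fst_sub_le_quarter h.abs_le hε1 ht hslow (s := s) hst
  have hz1 : 1 ≤ ‖z t‖ := by
    have : 0 ≤ 4 * ε * (‖y t‖ + 2 * M) := by have := h.bound_nonneg; positivity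
    unfold IsSlowState at hslow
    linarith
  have hρ : 0 < ‖z t‖ := by linarith
  unfold slowDissipation
  set a := modSat σ (1 / 2) * σ (1 / 2)
  have ha0 : 0 < a := mul_pos (h.modSat_pos one_half_pos) (h.pos _ one_half_pos)
  have hpointwise : ∀ s ∈ Set.Icc t (t + ε), a / (5 / 4 * ‖z t‖) ^ 2 * ⟪bvp ε s, z s⟫ ^ 2 ≤
      dissipation σ (bvp ε s) (z s) (y s) := fun s hst =>
    h.div_sq_mul_sq_le_dissipation (norm_bvp ε s) _ one_half_pos
      (by linarith [hquarter s hst, norm_sub_norm_le (z t) (z s), norm_sub_rev (z t) (z s)])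
      (by linarith [hquarter s hst, norm_sub_norm_le (z s) (z t)])
  have htε : t ≤ t + ε := by linarith
  calc a / 10 * ε ≤ a / (5 / 4 * ‖z t‖) ^ 2 * (ε * (‖z t‖ ^ 2 / 4 - (‖z t‖ / 4) ^ 2)) := by
        have := hρ.ne'
        field_simp
        norm_num
    _ ≤ a / (5 / 4 * ‖z t‖) ^ 2 * ∫ s in t..(t + ε), ⟪bvp ε s, z s⟫ ^ 2 := by
        gcongr
        exact hs.le_integral_sq_inner hε ht hquarter
    _ = ∫ s in t..(t + ε), a / (5 / 4 * ‖z t‖) ^ 2 * ⟪bvp ε s, z s⟫ ^ 2 :=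
        (intervalIntegral.integral_const_mul _ _).symm
    _ ≤ ∫ s in t..(t + ε), dissipation σ (bvp ε s) (z s) (y s) :=
        integral_mono_on htε (hs.intervalIntegrable_along
          (F := fun p => a / (5 / 4 * ‖z t‖) ^ 2 * ⟪p.1, p.2.1⟫ ^ 2) (by fun_prop) ht htε)
          (hs.intervalIntegrable_dissipation h.lipschitz h.odd ht htε) hpointwise

theorem isSlowState_of_le_norm_snd (hM : ∀ x, |σ x| ≤ M) (hs : IsSolTeps σ ε z y)
    (hε1 : ε ≤ 1 / 100) (ht : 0 ≤ t) (hfast : ¬IsSlowState M ε (z t) (y t))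
    (hy : 12 + 9 * M ≤ ‖y t‖) (hst : s ∈ Set.Icc (t + 1 / 4) (t + 1)) :
    IsSlowState M ε (z s) (y s) := by
  have hM0 : 0 ≤ M := (abs_nonneg _).trans (hM 0)
  have hts : t ≤ s := by linarith [hst.1]
  have hMd : M * (s - t) ≤ M := mul_le_of_le_one_right hM0 (by linarith [hst.2])
  have hdy := hs.norm_snd_sub_le hM ht hts
  have hdrift : (s - t) * ‖y s‖ ≤ ‖z s‖ + ‖z t‖ + M * (s - t) := by
    have hz := hs.norm_fst_sub_smul_snd_sub_le hM ht hts hst.2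
    calc (s - t) * ‖y s‖ = ‖(s - t) • y s‖ := by
          rw [norm_smul, Real.norm_of_nonneg (by linarith)]
      _ = ‖z s - z t - (z s - (s - t) • y s - z t)‖ := by congr 1; abel
      _ ≤ ‖z s‖ + ‖z t‖ + M * (s - t) :=
          (norm_sub_le _ _).trans (add_le_add (norm_sub_le _ _) hz)
  unfold IsSlowState at hfast ⊢
  push Not at hfast
  have hys : ‖y t‖ - M ≤ ‖y s‖ := by
    linarith [norm_sub_norm_le (y t) (y s), norm_sub_rev (y t) (y s)]
  have hys' : ‖y s‖ ≤ ‖y t‖ + M := by linarith [norm_sub_norm_le (y s) (y t)]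
  have hquarter : 1 / 4 * (‖y t‖ - 2 * M) ≤ (s - t) * (‖y s‖ - M) :=
    mul_le_mul (by linarith [hst.1]) (by linarith) (by linarith) (by linarith)
  have hεt : ε * (‖y t‖ + 2 * M) ≤ 1 / 100 * (‖y t‖ + 2 * M) := by gcongr
  have hεs : ε * (‖y s‖ + 2 * M) ≤ 1 / 100 * (‖y t‖ + M + 2 * M) := by gcongr
  linarith

theorem correctedV0_add_period_le_add (h : IsConcaveSaturation σ L M) (hs : IsSolTeps σ ε z y)
    (hε : 0 < ε) (hε1 : ε ≤ 1) (hεc : 2 * (M ^ 2 * L / 4 + M ^ 2) * ε ≤ slowDissipation σ / 4)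
    (ht : 0 ≤ t) :
    correctedV0 σ ε (z (t + ε)) (y (t + ε)) ≤
      correctedV0 σ ε (z t) (y t) + slowDissipation σ / 4 * ε := by
  have hdis := intervalIntegral.integral_nonneg (μ := volume)
    (le_add_of_nonneg_right hε.le : t ≤ t + ε)
    fun s _ => h.dissipation_nonneg (bvp ε s) (z s) (y s)
  have := mul_le_mul_of_nonneg_right hεc hε.le
  linarith [hs.correctedV0_add_period_le h hε hε1 ht]

theorem correctedV0_add_period_le_sub (h : IsConcaveSaturation σ L M) (hs : IsSolTeps σ ε z y)
    (hε : 0 < ε) (hε1 : ε ≤ 1) (hεc : 2 * (M ^ 2 * L / 4 + M ^ 2) * ε ≤ slowDissipation σ / 4)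
    (ht : 0 ≤ t) (hslow : IsSlowState M ε (z t) (y t)) :
    correctedV0 σ ε (z (t + ε)) (y (t + ε)) ≤
      correctedV0 σ ε (z t) (y t) - 3 / 4 * slowDissipation σ * ε := by
  have := mul_le_mul_of_nonneg_right hεc hε.le
  linarith [hs.correctedV0_add_period_le h hε hε1 ht,
    hs.le_integral_dissipation h hε hε1 ht hslow]

theorem correctedV0_add_two_nat_mul_le (h : IsConcaveSaturation σ L M) (hs : IsSolTeps σ ε z y)
    (hε : 0 < ε) (hε1 : ε ≤ 1) (hεc : 2 * (M ^ 2 * L / 4 + M ^ 2) * ε ≤ slowDissipation σ / 4)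
    (ht : 0 ≤ t) {n : ℕ}
    (hslow : ∀ j < n, IsSlowState M ε (z (t + n * ε + j * ε)) (y (t + n * ε + j * ε))) :
    correctedV0 σ ε (z (t + n * ε + n * ε)) (y (t + n * ε + n * ε)) ≤
      correctedV0 σ ε (z t) (y t) - slowDissipation σ / 2 * (n * ε) := by
  have hdrift := le_add_nat_mul_of_forall_step_le
    (w := fun t => correctedV0 σ ε (z t) (y t)) (n := n) fun j _ =>
    hs.correctedV0_add_period_le_add h hε hε1 hεc (by positivity : 0 ≤ t + j * ε)
  have hdecay := le_add_nat_mul_of_forall_step_le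
    (w := fun t => correctedV0 σ ε (z t) (y t)) (A := -(3 / 4 * slowDissipation σ * ε))
    fun j hj => hs.correctedV0_add_period_le_sub h hε hε1 hεc
      (by positivity : 0 ≤ t + n * ε + j * ε) (hslow j hj)
  linarith

theorem exists_correctedV0_le_sub (h : IsConcaveSaturation σ L M) (hs : IsSolTeps σ ε z y)
    (hε : 0 < ε) (hε1 : ε ≤ 1 / 100)
    (hεc : 2 * (M ^ 2 * L / 4 + M ^ 2) * ε ≤ slowDissipation σ / 4) (ht : 0 ≤ t)
    (hout : 12 + 9 * M < ‖(z t, y t)‖) :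
    ∃ s ≥ t, correctedV0 σ ε (z s) (y s) ≤
      correctedV0 σ ε (z t) (y t) - slowDissipation σ / 8 * ε := by
  have hc := slowDissipation_pos h
  by_cases hslow : IsSlowState M ε (z t) (y t)
  · refine ⟨t + ε, by linarith, (hs.correctedV0_add_period_le_sub h hε (by linarith) hεc ht
      hslow).trans ?_⟩
    linarith [mul_pos hc hε]
  have hy := le_norm_snd_of_not_isSlowState h.bound_nonneg hε1 hout hslow
  obtain ⟨n, hn, hn'⟩ := exists_nat_mul_mem_Icc (a := 1 / 4) (b := 1 / 2) hε (by norm_num)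
    (by linarith)
  refine ⟨t + n * ε + n * ε, by linarith, (hs.correctedV0_add_two_nat_mul_le h hε (by linarith)
    hεc ht fun j hj => ?_).trans ?_⟩
  · have hjn : j * ε ≤ n * ε := by gcongr
    have hj0 : 0 ≤ j * ε := by positivity
    exact hs.isSlowState_of_le_norm_snd h.abs_le hε1 ht hslow hy ⟨by linarith, by linarith⟩
  · have : slowDissipation σ * ε ≤ slowDissipation σ * (1 / 2) := by gcongr; linarith
    have : slowDissipation σ * (1 / 4) ≤ slowDissipation σ * (n * ε) := by gcongr
    linarith

theorem exists_norm_le (h : IsConcaveSaturation σ L M) (hs : IsSolTeps σ ε z y)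
    (hε : 0 < ε) (hε1 : ε ≤ 1 / 100)
    (hεc : 2 * (M ^ 2 * L / 4 + M ^ 2) * ε ≤ slowDissipation σ / 4) :
    ∃ t ≥ 0, ‖(z t, y t)‖ ≤ 12 + 9 * M := by
  by_contra! hout
  let W : Set.Ici (0 : ℝ) → ℝ := fun t => correctedV0 σ ε (z t) (y t)
  have hbdd : BddBelow (Set.range W) :=
    ⟨-(ε * M) ^ 2, Set.forall_mem_range.2 fun t => neg_sq_le_correctedV0 h hε.le _ _⟩
  obtain ⟨⟨t, ht⟩, hmin⟩ := exists_lt_of_ciInf_lt (f := W)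
    (lt_add_of_pos_right _ (by
      have := slowDissipation_pos h
      positivity : 0 < slowDissipation σ / 8 * ε))
  obtain ⟨s, hts, hdecr⟩ := hs.exists_correctedV0_le_sub h hε hε1 hεc ht (hout t ht)
  have hle : iInf W ≤ correctedV0 σ ε (z s) (y s) :=
    ciInf_le hbdd ⟨s, Set.mem_Ici.2 (le_trans ht hts)⟩
  simp only [W] at hmin
  linarith

end IsSolTeps

end Attraction

section LocalDecay

variable {σ : ℝ → ℝ} {L : NNReal} {M ε : ℝ}

theorem inner_sub_inner_le_of_lipschitzWith {E : Type*} [NormedAddCommGroup E]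
    [InnerProductSpace ℝ E] {g : E → E} {K : NNReal} (hg : LipschitzWith K g) (h0 : g 0 = 0)
    (p q : E × E) : ⟪g p.1, p.2⟫ - ⟪g q.1, q.2⟫ ≤ K * ‖p - q‖ * (‖p‖ + ‖q‖) :=
  calc ⟪g p.1, p.2⟫ - ⟪g q.1, q.2⟫ = ⟪g p.1 - g q.1, p.2⟫ + ⟪g q.1, p.2 - q.2⟫ := by
        rw [inner_sub_left, inner_sub_right]
        ring
    _ ≤ ‖g p.1 - g q.1‖ * ‖p.2‖ + ‖g q.1‖ * ‖p.2 - q.2‖ :=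
        add_le_add (real_inner_le_norm _ _) (real_inner_le_norm _ _)
    _ ≤ K * ‖p - q‖ * ‖p‖ + K * ‖q‖ * ‖p - q‖ := by
        gcongr
        · exact (hg.norm_sub_le _ _).trans (by gcongr; exact norm_fst_le (p - q))
        · exact norm_snd_le p
        · simpa [h0] using (hg.norm_sub_le q.1 0).trans (by gcongr; simpa using norm_fst_le q)
        · exact norm_snd_le (p - q)
    _ = K * ‖p - q‖ * (‖p‖ + ‖q‖) := by ring

theorem averagingError_sub_le (hL : LipschitzWith L σ) (hodd : Function.Odd σ) {b : E2}
    (hb : ‖b‖ = 1) (p q : E2 × E2) :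
    averagingError σ b p.1 p.2 - averagingError σ b q.1 q.2 ≤
      2 * L * ‖p - q‖ * (‖p‖ + ‖q‖) := by
  have hzero : fvec σ 0 - feedback σ b 0 = 0 := by
    simp [fvec, feedback, hodd.map_zero]
  simpa [two_mul, averagingError] using inner_sub_inner_le_of_lipschitzWith
    ((lipschitzWith_fvec hL hodd).sub (lipschitzWith_feedback hL hb)) hzero p q

namespace IsConcaveSaturation

theorem exists_mul_le_dissipation (h : IsConcaveSaturation σ L M) (R : ℝ) :
    ∃ c > 0, ∀ b z y : E2, ‖b‖ = 1 → ‖(z, y)‖ ≤ R →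
      c * (‖y‖ ^ 2 + ⟪b, z⟫ ^ 2) ≤ dissipation σ b z y := by
  obtain ⟨c, hc, hmono⟩ := h.exists_monotoneOn_modSat_sub_mul (R + R)
  obtain ⟨c', hc', hlin⟩ := h.exists_mul_le_modSat R
  set ρ := max R 1
  have hρ : 0 < ρ := by positivity
  have hσρ : 0 < σ ρ := h.pos ρ hρ
  refine ⟨min c (c' * (σ ρ / ρ)), by positivity, fun b z y hb hzy => ?_⟩
  have hz : ‖z‖ ≤ R := (norm_fst_le (z, y)).trans hzy
  have hy : ‖y‖ ≤ R := (norm_snd_le (z, y)).trans hzy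
  have hdrift : c * ‖y‖ ^ 2 ≤ ⟪fvec σ z - fvec σ (z - y), y⟫ := by
    have := mul_sq_norm_sub_le_inner_radialField_sub (modSat_zero h.map_zero) hmono
      (by linarith [norm_nonneg z] : ‖z‖ ≤ R + R)
      ((norm_sub_le z y).trans (add_le_add hz hy))
    rwa [sub_sub_cancel, ← fvec_eq_radialField] at this
  have hfeedback : c' * (σ ρ / ρ) * ⟪b, z⟫ ^ 2 ≤ ⟪fvec σ z, feedback σ b z⟫ := by
    rcases (norm_nonneg z).eq_or_lt with hz0 | hz0
    · simp [norm_eq_zero.1 hz0.symm, fvec]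
    · rw [mul_assoc]
      refine le_trans ?_ (h.div_mul_sq_le_inner_fvec_feedback hb hρ (hz.trans (le_max_left R 1)))
      gcongr
      exact (le_div_iff₀ hz0).2 (hlin ‖z‖ ⟨hz0.le, hz⟩)
  calc min c (c' * (σ ρ / ρ)) * (‖y‖ ^ 2 + ⟪b, z⟫ ^ 2)
      ≤ c * ‖y‖ ^ 2 + c' * (σ ρ / ρ) * ⟪b, z⟫ ^ 2 := by
        rw [mul_add]
        gcongr
        · exact min_le_left _ _
        · exact min_le_right _ _
    _ ≤ dissipation σ b z y := add_le_add hdrift hfeedback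

theorem continuous_V0 (h : IsConcaveSaturation σ L M) :
    Continuous fun p : E2 × E2 => V0 σ p.1 p.2 := by
  have hprim : Continuous fun r => ∫ ξ in (0 : ℝ)..r, modSat σ ξ :=
    intervalIntegral.continuous_primitive
      (fun a b => (continuous_modSat h.continuous).intervalIntegrable a b) 0
  unfold V0
  fun_prop

theorem mul_sub_one_le_integral_modSat (h : IsConcaveSaturation σ L M) {r : ℝ} (hr : 0 ≤ r) :
    modSat σ 1 * (r - 1) ≤ ∫ ξ in (0 : ℝ)..r, modSat σ ξ := by
  rcases le_total r 1 with hr1 | hr1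
  · exact (mul_nonpos_of_nonneg_of_nonpos (h.modSat_nonneg zero_le_one)
      (sub_nonpos.2 hr1)).trans (h.integral_modSat_nonneg hr)
  · have hint : ∀ a b, IntervalIntegrable (modSat σ) volume a b := fun a b =>
      (continuous_modSat h.continuous).intervalIntegrable a b
    have htail : ∫ _ in (1 : ℝ)..r, modSat σ 1 ≤ ∫ ξ in (1 : ℝ)..r, modSat σ ξ :=
      integral_mono_on hr1 intervalIntegrable_const (hint 1 r) fun ξ hξ =>
        h.monotoneOn_modSat (zero_le_one' ℝ) (zero_le_one.trans hξ.1) hξ.1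
    rw [intervalIntegral.integral_const, smul_eq_mul, mul_comm] at htail
    rw [← integral_add_adjacent_intervals (hint 0 1) (hint 1 r)]
    exact htail.trans (le_add_of_nonneg_left (h.integral_modSat_nonneg zero_le_one))

theorem exists_norm_le_of_V0_le (h : IsConcaveSaturation σ L M) (v : ℝ) :
    ∃ R, ∀ z y : E2, V0 σ z y ≤ v → ‖(z, y)‖ ≤ R := by
  have hS1 : 0 < modSat σ 1 := h.modSat_pos one_pos
  refine ⟨max (v / modSat σ 1 + 1) (v + 1), fun z y hV => max_le_max ?_ ?_⟩
  · have hz := h.mul_sub_one_le_integral_modSat (norm_nonneg z)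
    have hzy := h.integral_modSat_nonneg (norm_nonneg (z - y))
    unfold V0 at hV
    rw [← sub_le_iff_le_add, le_div_iff₀ hS1]
    linarith [sq_nonneg ‖y‖]
  · nlinarith [h.sq_norm_le_V0 z y, sq_nonneg (‖y‖ - 1)]

end IsConcaveSaturation

namespace IsSolTeps

variable {s t : ℝ} {z y : ℝ → E2}

theorem norm_prodMk_sub_le_period (hL : LipschitzWith L σ) (h0 : σ 0 = 0)
    (hs : IsSolTeps σ ε z y) (hεL : 12 * (1 + L) * ε ≤ 1) (ht : 0 ≤ t)
    (hst : s ∈ Set.Icc t (t + ε)) :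
    ‖(z s, y s) - (z t, y t)‖ ≤ 3 * (1 + L) * ε * ‖(z t, y t)‖ := by
  have hsε : s - t ≤ ε := by linarith [hst.2]
  have hshort : (1 + L) * (s - t) ≤ (1 + L) * ε := by gcongr
  refine (hs.norm_prodMk_sub_le hL h0 ht hst.1 (by linarith [hst.1])).trans ?_
  calc 3 * (1 + L) * ‖(z t, y t)‖ * (s - t) ≤ 3 * (1 + L) * ‖(z t, y t)‖ * ε := by gcongr
    _ = 3 * (1 + L) * ε * ‖(z t, y t)‖ := by ring

theorem norm_prodMk_le_period (hL : LipschitzWith L σ) (h0 : σ 0 = 0)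
    (hs : IsSolTeps σ ε z y) (hεL : 12 * (1 + L) * ε ≤ 1) (ht : 0 ≤ t)
    (hst : s ∈ Set.Icc t (t + ε)) : ‖(z s, y s)‖ ≤ 5 / 4 * ‖(z t, y t)‖ := by
  have hsmall : 3 * (1 + L) * ε * ‖(z t, y t)‖ ≤ 1 / 4 * ‖(z t, y t)‖ := by
    gcongr
    linarith
  linarith [hs.norm_prodMk_sub_le_period hL h0 hεL ht hst,
    norm_sub_norm_le (z s, y s) (z t, y t)]

theorem intervalIntegrable_sq_norm_add_sq_inner (hs : IsSolTeps σ ε z y) (ht : 0 ≤ t)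
    (hst : t ≤ s) :
    IntervalIntegrable (fun r => ‖y r‖ ^ 2 + ⟪bvp ε r, z r⟫ ^ 2) volume t s :=
  hs.intervalIntegrable_along (F := fun p => ‖p.2.2‖ ^ 2 + ⟪p.1, p.2.1⟫ ^ 2) (by fun_prop) ht hst

theorem le_integral_sq_norm_snd (hs : IsSolTeps σ ε z y) (hε : 0 < ε) (ht : 0 ≤ t) {δ : ℝ}
    (hδ : ∀ s ∈ Set.Icc t (t + ε), ‖y s - y t‖ ≤ δ) :
    ε * (‖y t‖ ^ 2 / 2 - δ ^ 2) ≤ ∫ s in t..(t + ε), ‖y s‖ ^ 2 := by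
  have hmono := integral_mono_on (le_add_of_nonneg_right hε.le) intervalIntegrable_const
    (hs.intervalIntegrable_along (F := fun p => ‖p.2.2‖ ^ 2) (by fun_prop) ht
      (le_add_of_nonneg_right hε.le))
    fun s hst => half_sq_sub_sq_le_sq ((abs_norm_sub_norm_le _ _).trans (hδ s hst))
  rwa [intervalIntegral.integral_const, add_sub_cancel_left, smul_eq_mul] at hmono

theorem le_integral_sq_norm_add_sq_inner (hL : LipschitzWith L σ) (h0 : σ 0 = 0)
    (hs : IsSolTeps σ ε z y) (hε : 0 < ε) (hεL : 12 * (1 + L) * ε ≤ 1) (ht : 0 ≤ t) :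
    ε * ‖(z t, y t)‖ ^ 2 / 8 ≤ ∫ s in t..(t + ε), (‖y s‖ ^ 2 + ⟪bvp ε s, z s⟫ ^ 2) := by
  set n := ‖(z t, y t)‖
  have hδ : 3 * (1 + L) * ε * n ≤ n / 4 := by
    linarith [mul_le_mul_of_nonneg_right hεL (norm_nonneg (z t, y t))]
  have hmove := fun s hst => (hs.norm_prodMk_sub_le_period hL h0 hεL ht (s := s) hst).trans hδ
  have hz := hs.le_integral_sq_inner hε ht fun s hst => (norm_fst_le _).trans (hmove s hst)
  have hy := hs.le_integral_sq_norm_snd hε ht fun s hst => (norm_snd_le _).trans (hmove s hst)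
  have hn : n ^ 2 ≤ ‖z t‖ ^ 2 + ‖y t‖ ^ 2 := by
    rcases max_choice ‖z t‖ ‖y t‖ with hmax | hmax
    · exact (congrArg (· ^ 2) hmax).trans_le (le_add_of_nonneg_right (sq_nonneg _))
    · exact (congrArg (· ^ 2) hmax).trans_le (le_add_of_nonneg_left (sq_nonneg _))
  rw [integral_add (hs.intervalIntegrable_along (F := fun p => ‖p.2.2‖ ^ 2) (by fun_prop) ht
      (le_add_of_nonneg_right hε.le))
    (hs.intervalIntegrable_along (F := fun p => ⟪p.1, p.2.1⟫ ^ 2) (by fun_prop) ht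
      (le_add_of_nonneg_right hε.le))]
  calc ε * n ^ 2 / 8 ≤ ε * (‖y t‖ ^ 2 / 2 - (n / 4) ^ 2) + ε * (‖z t‖ ^ 2 / 4 - (n / 4) ^ 2) := by
        nlinarith [mul_le_mul_of_nonneg_left hn hε.le, mul_nonneg hε.le (sq_nonneg ‖y t‖)]
    _ ≤ _ := add_le_add hy hz

theorem V0_add_period_sub_le_of_norm_le (h : IsConcaveSaturation σ L M) {c R : ℝ} (hc : 0 ≤ c)
    (hdis : ∀ b z y : E2, ‖b‖ = 1 → ‖(z, y)‖ ≤ 5 / 4 * R →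
      c * (‖y‖ ^ 2 + ⟪b, z⟫ ^ 2) ≤ dissipation σ b z y)
    (hs : IsSolTeps σ ε z y) (hε : 0 < ε) (hεL : 12 * (1 + L) * ε ≤ 1)
    (hεc : 480 * L * (1 + L) * ε ≤ c) (ht : 0 ≤ t) (hR : ‖(z t, y t)‖ ≤ R) :
    V0 σ (z (t + ε)) (y (t + ε)) - V0 σ (z t) (y t) ≤
      -(c / 2) * ∫ s in t..(t + ε), (‖y s‖ ^ 2 + ⟪bvp ε s, z s⟫ ^ 2) := by
  set n := ‖(z t, y t)‖
  have htε : t ≤ t + ε := by linarith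
  have hmove := fun s hst => hs.norm_prodMk_sub_le_period h.lipschitz h.map_zero hεL ht (s := s) hst
  have hbound := fun s hst => hs.norm_prodMk_le_period h.lipschitz h.map_zero hεL ht (s := s) hst
  have hV := hs.V0_add_period_sub_le h.lipschitz h.odd hε ht (A := 15 * L * (1 + L) * ε * n ^ 2)
    fun s hst => by
      have := averagingError_sub_le h.lipschitz h.odd (norm_bvp ε s) (z s, y s) (z t, y t)
      have hprod : 2 * L * ‖(z s, y s) - (z t, y t)‖ * (‖(z s, y s)‖ + n) ≤
          2 * L * (3 * (1 + L) * ε * n) * (5 / 4 * n + n) := by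
        gcongr
        · exact hmove s hst
        · exact hbound s hst
      have : 0 ≤ L * (1 + L) * ε * n ^ 2 := by positivity
      linarith
  have hint := integral_mono_on htε
    ((hs.intervalIntegrable_sq_norm_add_sq_inner ht htε).const_mul c)
    (hs.intervalIntegrable_dissipation h.lipschitz h.odd ht htε)
    fun s hst => hdis _ _ _ (norm_bvp ε s) ((hbound s hst).trans (by gcongr))
  rw [intervalIntegral.integral_const_mul] at hint
  have hlower := hs.le_integral_sq_norm_add_sq_inner h.lipschitz h.map_zero hε hεL ht
  have := mul_le_mul_of_nonneg_right hεc (by positivity : 0 ≤ ε * n ^ 2 / 8)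
  have := mul_le_mul_of_nonneg_left hlower hc
  linarith

theorem V0_add_nat_mul_sub_le (h : IsConcaveSaturation σ L M) {c R v : ℝ} (hc : 0 ≤ c)
    (hdis : ∀ b z y : E2, ‖b‖ = 1 → ‖(z, y)‖ ≤ 5 / 4 * R →
      c * (‖y‖ ^ 2 + ⟪b, z⟫ ^ 2) ≤ dissipation σ b z y)
    (hsub : ∀ z y : E2, V0 σ z y ≤ v → ‖(z, y)‖ ≤ R)
    (hs : IsSolTeps σ ε z y) (hε : 0 < ε) (hεL : 12 * (1 + L) * ε ≤ 1)
    (hεc : 480 * L * (1 + L) * ε ≤ c) (ht : 0 ≤ t) (hV : V0 σ (z t) (y t) ≤ v) (k : ℕ) :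
    V0 σ (z (t + k * ε)) (y (t + k * ε)) - V0 σ (z t) (y t) ≤
      -(c / 2) * ∫ s in t..(t + k * ε), (‖y s‖ ^ 2 + ⟪bvp ε s, z s⟫ ^ 2) := by
  induction k with
  | zero => simp
  | succ k ih =>
    have htk : t ≤ t + k * ε := le_add_of_nonneg_right (by positivity)
    have hint : 0 ≤ ∫ s in t..(t + k * ε), (‖y s‖ ^ 2 + ⟪bvp ε s, z s⟫ ^ 2) :=
      intervalIntegral.integral_nonneg htk fun s _ => by positivity
    have hVk : V0 σ (z (t + k * ε)) (y (t + k * ε)) ≤ v := by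
      linarith [mul_nonneg hc hint]
    have hstep := hs.V0_add_period_sub_le_of_norm_le h hc hdis hε hεL hεc (ht.trans htk)
      (hsub _ _ hVk)
    rw [Nat.cast_add_one, add_one_mul, ← add_assoc, ← integral_add_adjacent_intervals
      (hs.intervalIntegrable_sq_norm_add_sq_inner ht htk)
      (hs.intervalIntegrable_sq_norm_add_sq_inner (ht.trans htk) (le_add_of_nonneg_right hε.le))]
    linarith

end IsSolTeps

end LocalDecay

namespace IsConcaveSaturation

variable {σ : ℝ → ℝ} {L : NNReal} {M : ℝ}

theorem exists_forall_exists_norm_le (h : IsConcaveSaturation σ L M) :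
    ∃ ε₁ > 0, ∀ ε, 0 < ε → ε < ε₁ → ∀ z y : ℝ → E2, IsSolTeps σ ε z y →
      ∃ t ≥ 0, ‖(z t, y t)‖ ≤ 12 + 9 * M := by
  have hc := slowDissipation_pos h
  have hM := h.bound_pos
  refine ⟨min (1 / 100) (slowDissipation σ / 4 / (2 * (M ^ 2 * L / 4 + M ^ 2))), by positivity,
    fun ε hε hlt z y hs => hs.exists_norm_le h hε (hlt.le.trans (min_le_left _ _)) ?_⟩
  rw [mul_comm]
  exact (le_div_iff₀ (by positivity)).1 (hlt.le.trans (min_le_right _ _))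

theorem exists_forall_V0_add_nat_mul_sub_le (h : IsConcaveSaturation σ L M) (R : ℝ) :
    ∃ ε₂ > 0, ∃ C > 0, ∀ ε, 0 < ε → ε < ε₂ → ∀ z y : ℝ → E2, IsSolTeps σ ε z y →
      ∀ t ≥ 0, ‖(z t, y t)‖ ≤ R → ∀ k : ℕ,
        V0 σ (z (t + k * ε)) (y (t + k * ε)) - V0 σ (z t) (y t) ≤
          -C * ∫ s in t..(t + k * ε), (‖y s‖ ^ 2 + ⟪bvp ε s, z s⟫ ^ 2) := by
  obtain ⟨v, hv⟩ := (isCompact_closedBall (0 : E2 × E2) R).exists_bound_of_continuousOn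
    h.continuous_V0.continuousOn
  obtain ⟨R', hR'⟩ := h.exists_norm_le_of_V0_le v
  obtain ⟨c, hc, hdis⟩ := h.exists_mul_le_dissipation (5 / 4 * R')
  have hL : (0 : ℝ) ≤ L := L.coe_nonneg
  refine ⟨min (1 / (12 * (1 + L))) (c / (480 * (1 + L) * (1 + L))), by positivity, c / 2,
    half_pos hc, fun ε hε hlt z y hs t ht hp k => ?_⟩
  have hεL : ε * (12 * (1 + L)) ≤ 1 :=
    (le_div_iff₀ (by positivity)).1 (hlt.le.trans (min_le_left _ _))
  have hεc : ε * (480 * (1 + L) * (1 + L)) ≤ c :=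
    (le_div_iff₀ (by positivity)).1 (hlt.le.trans (min_le_right _ _))
  have hVt : V0 σ (z t) (y t) ≤ v :=
    (le_abs_self _).trans (hv (z t, y t) (mem_closedBall_zero_iff.2 hp))
  exact hs.V0_add_nat_mul_sub_le h hc.le hdis hR' hε (by linarith)
    (by nlinarith [mul_nonneg hε.le hL]) ht hVt k

end IsConcaveSaturation

theorem stmt14_general {σ : ℝ → ℝ} {L : NNReal} {M : ℝ} (hσ : IsConcaveSaturation σ L M) :
    ∃ ε₀ > 0, ∃ C > 0, ∀ ε : ℝ, 0 < ε → ε < ε₀ → ∀ z₀ y₀ : E2,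
      ∃ T₂ : ℝ, 0 ≤ T₂ ∧
        ∀ T : ℝ, (∃ k : ℕ, T = k * ε) →
          ∀ z y : ℝ → E2, IsSolTeps σ ε z y → z 0 = z₀ → y 0 = y₀ →
            V0 σ (z (T₂ + T)) (y (T₂ + T)) - V0 σ (z T₂) (y T₂) ≤
              -C * ∫ t in T₂..(T₂ + T), (‖y t‖ ^ 2 + ⟪bvp ε t, z t⟫ ^ 2) := by
  obtain ⟨ε₁, hε₁, hattract⟩ := hσ.exists_forall_exists_norm_le
  obtain ⟨ε₂, hε₂, C, hC, hdecay⟩ := hσ.exists_forall_V0_add_nat_mul_sub_le (12 + 9 * M)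
  refine ⟨min ε₁ ε₂, lt_min hε₁ hε₂, C, hC, fun ε hε hlt z₀ y₀ => ?_⟩
  by_cases hex : ∃ z y : ℝ → E2, IsSolTeps σ ε z y ∧ z 0 = z₀ ∧ y 0 = y₀
  · obtain ⟨z, y, hs, rfl, rfl⟩ := hex
    obtain ⟨T₂, hT₂, hnorm⟩ := hattract ε hε (hlt.trans_le (min_le_left _ _)) z y hs
    refine ⟨T₂, hT₂, ?_⟩
    rintro _ ⟨k, rfl⟩ z' y' hs' hz hy
    obtain ⟨hzT, hyT⟩ := hs'.eq_of_eq_zero hσ.lipschitz hs hz hy hT₂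
    exact hdecay ε hε (hlt.trans_le (min_le_right _ _)) z' y' hs' T₂ hT₂
      (by rwa [hzT, hyT]) k
  · exact ⟨0, le_rfl, fun _ _ z y hs hz hy => absurd ⟨z, y, hs, hz, hy⟩ hex⟩

/-- Refined decay estimate for `(T_ε)`: for `ε` small, after some time `T₂`, the decrease
of `V₀` over any window of length `T ∈ [1/2, 2]` with `T/ε ∈ ℕ` dominates the `L²` norms
of `y` and `b_εᵀ z`. -/
theorem stmt14 (σ : ℝ → ℝ) (hσ : IsSaturation σ) :
    ∃ ε₀ > 0, ∃ C > 0, ∀ ε : ℝ, 0 < ε → ε < ε₀ → ∀ z₀ y₀ : E2,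
      ∃ T₂ : ℝ, 0 ≤ T₂ ∧
        ∀ T : ℝ, 1 / 2 ≤ T → T ≤ 2 → (∃ k : ℕ, T = k * ε) →
          ∀ z y : ℝ → E2, IsSolTeps σ ε z y → z 0 = z₀ → y 0 = y₀ →
            V0 σ (z (T₂ + T)) (y (T₂ + T)) - V0 σ (z T₂) (y T₂) ≤
              -C * ∫ t in T₂..(T₂ + T), (‖y t‖ ^ 2 + ⟪bvp ε t, z t⟫ ^ 2) := by
  obtain ⟨L, M, hσ'⟩ := hσ.exists_isConcaveSaturation
  obtain ⟨ε₀, hε₀, C, hC, hdecay⟩ := stmt14_general hσ'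
  exact ⟨ε₀, hε₀, C, hC, fun ε hε hlt z₀ y₀ => (hdecay ε hε hlt z₀ y₀).imp fun _ hT₂ =>
    ⟨hT₂.1, fun T _ _ => hT₂.2 T⟩⟩
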